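/- arXiv:2006.08930 — 5 statements merged into one kernel-verified Lean document; each statement's English description precedes it below -/
import Mathlib

section
/- For every r with 0 ≤ r ≤ 1/3: ∑_{n=0}^∞ |a_n| r^n + (1/(1+|a_0|) + r/(1-r)) · ∑_{n=1}^∞ |a_n|² r^{2n} + (8/9) · ∑_{n=1}^∞ n |a_n|² r^{2n} ≤ 1. -/
open MeasureTheory AddCircle ContinuousMap Finset in
lemma contr_rho (f : ℂ → ℂ) (a : ℕ → ℂ)
    (hb : ∀ z ∈ Metric.ball (0 : ℂ) 1, ‖f z‖ ≤ 1)
    (hs : ∀ z ∈ Metric.ball (0 : ℂ) 1, HasSum (fun n => a n * z ^ n) (f z))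
    (ρ : ℝ) (h0 : 0 ≤ ρ) (h1 : ρ < 1) (x : ℕ → ℂ) (N : ℕ) :
    ∑ k ∈ range (N+1), ‖∑ j ∈ range (k+1), x j * a (k - j)‖^2 * ρ^(2*k)
      ≤ ∑ j ∈ range (N+1), ‖x j‖^2 * ρ^(2*j) := by
  have hF : Fact ((0:ℝ) < 1) := ⟨one_pos⟩
  have hsum : Summable (fun n => ‖a n‖ * ρ^n) := by
    have := (hs (ρ:ℂ) (by simp [abs_of_nonneg h0, h1])).summable.norm
    simpa [abs_of_nonneg h0] using this
  let e : ℤ → C(AddCircle (1:ℝ), ℂ) := fun n => fourier n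
  have hpow : ∀ (n : ℕ) (t : AddCircle (1:ℝ)), e n t = (e 1 t)^n := by
    intro n t
    induction n with
    | zero => simp [e]
    | succ n ih =>
      have : e ((n+1 : ℕ) : ℤ) t = e n t * e 1 t := by
        push_cast; exact fourier_add
      rw [this, ih, pow_succ]
  have he1 : ∀ (n : ℤ) (t : AddCircle (1:ℝ)), ‖e n t‖ = 1 := fun n t => Circle.norm_coe _
  let L : C(AddCircle (1:ℝ), ℂ) →L[ℂ] Lp ℂ 2 (@haarAddCircle 1 hF) := toLp (E := ℂ) 2 haarAddCircle ℂ
  have hL : ∀ n, L (e n) = fourierLp 2 n := fun n => rfl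
  have ho := @orthonormal_fourier 1 hF
  have hsF : ∀ j : ℕ, Summable (fun n : ℕ => (a n * (ρ:ℂ)^n) • e ((n + j : ℕ) : ℤ)) := by
    intro j
    refine Summable.of_norm ?_
    refine hsum.congr fun n => ?_
    rw [norm_smul]
    have : ‖e ((n + j : ℕ) : ℤ)‖ = 1 := fourier_norm _
    rw [this]; simp [abs_of_nonneg h0]
  let G : ℕ → C(AddCircle (1:ℝ), ℂ) := fun j => ∑' n : ℕ, (a n * (ρ:ℂ)^n) • e ((n + j : ℕ) : ℤ)
  have hG : ∀ j t, G j t = (e 1 t)^j * f (ρ * e 1 t) := by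
    intro j t
    have A := (hsF j).hasSum.mapL (ContinuousMap.evalCLM ℂ t)
    have B := (hs (ρ * e 1 t) (by simp [he1, abs_of_nonneg h0, h1])).mul_left ((e 1 t)^j)
    refine A.unique ?_
    have hfun : (fun n : ℕ => (ContinuousMap.evalCLM ℂ t) ((a n * (ρ:ℂ)^n) • e ((n + j : ℕ) : ℤ)))
        = fun n => (e 1 t)^j * (a n * (ρ * e 1 t)^n) := ?_
    · rw [hfun]; exact B
    funext n
    simp only [ContinuousMap.evalCLM_apply, ContinuousMap.smul_apply, hpow, smul_eq_mul]
    ring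
  have hin : ∀ (k j : ℕ), inner ℂ (fourierLp 2 (k:ℤ)) (L (G j)) = if j ≤ k then a (k-j) * (ρ:ℂ)^(k-j) else 0 := by
    intro k j
    have A := ((hsF j).hasSum.mapL L).mapL (innerSL ℂ (fourierLp (T := 1) 2 (k:ℤ)))
    have hterm : ∀ n : ℕ, (innerSL ℂ (fourierLp (T := 1) 2 (k:ℤ))) (L ((a n * (ρ:ℂ)^n) • e ((n + j : ℕ) : ℤ)))
        = if n + j = k then a n * (ρ:ℂ)^n else 0 := by
      intro n
      rw [map_smul, hL, innerSL_apply_apply, inner_smul_right, orthonormal_iff_ite.mp ho]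
      by_cases h : n + j = k
      · rw [if_pos h, if_pos (by exact_mod_cast h.symm), mul_one]
      · rw [if_neg h, if_neg (by intro h'; exact h (by exact_mod_cast h'.symm)), mul_zero]
    simp_rw [hterm] at A
    refine A.unique ?_
    by_cases h : j ≤ k
    · rw [if_pos h]
      have hsg := hasSum_single (f := fun n => if n + j = k then a n * (ρ:ℂ)^n else 0) (k - j)
        (fun b hb' => if_neg (by omega))
      rw [if_pos (by omega : k - j + j = k)] at hsg
      exact hsg
    · rw [if_neg h]
      convert hasSum_zero using 2 with n
      rw [if_neg (by omega)]
  let P : C(AddCircle (1:ℝ), ℂ) := ∑ j ∈ range (N+1), (x j * (ρ:ℂ)^j) • e j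
  let H : C(AddCircle (1:ℝ), ℂ) := ∑ j ∈ range (N+1), (x j * (ρ:ℂ)^j) • G j
  have hHP : ∀ t, ‖H t‖ ≤ ‖P t‖ := by
    intro t
    have : H t = P t * f (ρ * e 1 t) := by
      simp only [H, P, ContinuousMap.sum_apply, ContinuousMap.smul_apply, hG, hpow, smul_eq_mul, Finset.sum_mul]
      exact Finset.sum_congr rfl fun j _ => by ring
    rw [this, norm_mul]
    exact mul_le_of_le_one_right (norm_nonneg _) (hb _ (by simp [he1, abs_of_nonneg h0, h1]))
  have hnorm : ‖L H‖ ≤ ‖L P‖ := by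
    apply Lp.norm_le_norm_of_ae_le
    filter_upwards [ContinuousMap.coeFn_toLp (p := 2) (𝕜 := ℂ) (@haarAddCircle 1 hF) H,
      ContinuousMap.coeFn_toLp (p := 2) (𝕜 := ℂ) (@haarAddCircle 1 hF) P] with t h1 h2
    change ‖(toLp 2 haarAddCircle ℂ H) t‖ ≤ ‖(toLp 2 haarAddCircle ℂ P) t‖
    rw [h1, h2]; exact hHP t
  have hP : ‖L P‖^2 = ∑ j ∈ range (N+1), ‖x j‖^2 * ρ^(2*j) := by
    have hho : Orthonormal ℂ (fun n : ℕ => fourierLp (T := 1) 2 (n:ℤ)) :=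
      ho.comp _ Nat.cast_injective
    have e1 : L P = ∑ j ∈ range (N+1), (x j * (ρ:ℂ)^j) • fourierLp (T := 1) 2 (j:ℤ) := by
      simp only [P, map_sum, map_smul, hL]
    have e2 := hho.inner_sum (fun j => x j * (ρ:ℂ)^j) (fun j => x j * (ρ:ℂ)^j) (range (N+1))
    rw [← e1, inner_self_eq_norm_sq_to_K] at e2
    have e3 : ((‖L P‖^2 : ℝ) : ℂ) = ((∑ j ∈ range (N+1), ‖x j‖^2 * ρ^(2*j) : ℝ) : ℂ) := by
      push_cast
      refine Eq.trans e2 (Finset.sum_congr rfl fun j _ => ?_)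
      rw [mul_comm, Complex.mul_conj, Complex.normSq_eq_norm_sq]
      push_cast
      simp [abs_of_nonneg h0]
      ring
    exact_mod_cast e3
  have hH : ∀ k ∈ range (N+1), ‖inner ℂ (fourierLp (T := 1) 2 (k:ℤ)) (L H)‖^2
      = ‖∑ j ∈ range (k+1), x j * a (k - j)‖^2 * ρ^(2*k) := by
    intro k hk
    have : inner ℂ (fourierLp (T := 1) 2 (k:ℤ)) (L H) = (∑ j ∈ range (k+1), x j * a (k - j)) * (ρ:ℂ)^k := by
      simp only [H, map_sum, map_smul, inner_sum, inner_smul_right, hin, Finset.sum_mul]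
      have hsub : range (k+1) ⊆ range (N+1) := by
        intro i hi; simp at *; omega
      rw [← Finset.sum_subset hsub]
      · refine Finset.sum_congr rfl fun j hj => ?_
        have hj' : j ≤ k := by simp at hj; omega
        rw [if_pos hj']
        conv_rhs => rw [show k = j + (k - j) by omega, pow_add]
        rw [show j + (k - j) - j = k - j by omega]
        ring
      · intro j _ hj
        rw [if_neg (by simp at hj; omega), mul_zero]
    rw [this, norm_mul, mul_pow]
    simp [abs_of_nonneg h0, ← pow_mul, mul_comm]
  have hho : Orthonormal ℂ (fun n : ℕ => fourierLp (T := 1) 2 (n:ℤ)) :=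
      ho.comp _ Nat.cast_injective
  have hB := hho.sum_inner_products_le (L H) (s := range (N+1))
  rw [Finset.sum_congr rfl hH] at hB
  calc _ ≤ _ := hB
    _ ≤ ‖L P‖^2 := by gcongr
    _ = _ := hP

open Finset in
lemma contr (f : ℂ → ℂ) (a : ℕ → ℂ)
    (hb : ∀ z ∈ Metric.ball (0 : ℂ) 1, ‖f z‖ ≤ 1)
    (hs : ∀ z ∈ Metric.ball (0 : ℂ) 1, HasSum (fun n => a n * z ^ n) (f z))
    (x : ℕ → ℂ) (N : ℕ) :
    ∑ k ∈ range (N+1), ‖∑ j ∈ range (k+1), x j * a (k - j)‖^2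
      ≤ ∑ j ∈ range (N+1), ‖x j‖^2 := by
  have hc : ∀ c : ℕ → ℝ, Filter.Tendsto (fun ρ : ℝ => ∑ k ∈ range (N+1), c k * ρ^(2*k)) (nhdsWithin 1 (Set.Iio 1))
      (nhds (∑ k ∈ range (N+1), c k)) := by
    intro c
    have : Continuous (fun ρ : ℝ => ∑ k ∈ range (N+1), c k * ρ^(2*k)) := by fun_prop
    have := (this.tendsto 1).mono_left (nhdsWithin_le_nhds (s := Set.Iio 1))
    simpa using this
  refine le_of_tendsto_of_tendsto (hc _) (hc _) ?_
  filter_upwards [Ioo_mem_nhdsLT (show (0:ℝ) < 1 by norm_num)] with ρ hρ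
  exact contr_rho f a hb hs ρ hρ.1.le hρ.2 x N

/-- Contraction property tested on a special vector. -/
lemma gen (a : ℕ → ℂ)
    (hc : ∀ (x : ℕ → ℂ) (N : ℕ), ∑ k ∈ Finset.range (N+1), ‖∑ j ∈ Finset.range (k+1), x j * a (k - j)‖^2
      ≤ ∑ j ∈ Finset.range (N+1), ‖x j‖^2) (d n : ℕ) (v : ℕ → ℂ) :
    ‖a (d+1+n) + ∑ i ∈ Finset.range (n+1), v i * a i‖^2 + ∑ k ∈ Finset.range (d+1), ‖a k‖^2
      + (if n = 0 then 0 else ‖a (d+1) + v n * a 0‖^2)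
      ≤ 1 + ∑ i ∈ Finset.range (n+1), ‖v i‖^2 := by
  let x : ℕ → ℂ := fun j => if j = 0 then 1 else if j ≤ d then 0 else v (d+1+n-j)
  have hx0 : x 0 = 1 := by simp [x]
  have hx1 : ∀ j, j ≠ 0 → j ≤ d → x j = 0 := fun j h h' => by simp [x, h, h']
  have hx2 : ∀ j, d < j → x j = v (d+1+n-j) := fun j h => by
    simp only [x]; rw [if_neg (by omega), if_neg (by omega)]
  have low : ∀ k, k ≤ d → ∑ j ∈ Finset.range (k+1), x j * a (k - j) = a k := by
    intro k hk
    rw [Finset.sum_range_succ', Finset.sum_eq_zero, hx0]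
    · simp
    · intro j hj
      rw [hx1 _ (by omega) (by simp at hj; omega), zero_mul]
  have top : ∑ j ∈ Finset.range (d+1+n+1), x j * a (d+1+n - j)
      = a (d+1+n) + ∑ i ∈ Finset.range (n+1), v i * a i := by
    rw [show d+1+n+1 = (d+1) + (n+1) by ring, Finset.sum_range_add]
    congr 1
    · rw [Finset.sum_range_succ', Finset.sum_eq_zero, hx0]
      · simp
      · intro j hj
        rw [hx1 _ (by omega) (by simp at hj; omega), zero_mul]
    · rw [← Finset.sum_range_reflect]
      refine Finset.sum_congr rfl fun j hj => ?_
      simp at hj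
      rw [hx2 _ (by omega)]
      congr 2 <;> omega
  have nrm : ∑ j ∈ Finset.range (d+1+n+1), ‖x j‖^2 = 1 + ∑ i ∈ Finset.range (n+1), ‖v i‖^2 := by
    rw [show d+1+n+1 = (d+1) + (n+1) by ring, Finset.sum_range_add]
    congr 1
    · rw [Finset.sum_range_succ', Finset.sum_eq_zero, hx0]
      · simp
      · intro j hj
        rw [hx1 _ (by omega) (by simp at hj; omega)]; simp
    · rw [← Finset.sum_range_reflect]
      refine Finset.sum_congr rfl fun j hj => ?_
      simp at hj
      rw [hx2 _ (by omega)]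
      congr 3; omega
  have main := hc x (d+1+n)
  rw [nrm, Finset.sum_range_succ, top, Finset.sum_range_add,
    Finset.sum_congr rfl (fun k hk => by rw [low k (by simp at hk; omega)])] at main
  have mid : (if n = 0 then 0 else ‖a (d+1) + v n * a 0‖^2) ≤
      ∑ i ∈ Finset.range n, ‖∑ j ∈ Finset.range (d+1+i+1), x j * a (d+1+i-j)‖^2 := by
    split_ifs with h
    · exact Finset.sum_nonneg fun _ _ => by positivity
    · refine le_trans (le_of_eq ?_) (Finset.single_le_sum (f := fun i => ‖∑ j ∈ Finset.range (d+1+i+1), x j * a (d+1+i-j)‖^2)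
        (fun _ _ => by positivity) (Finset.mem_range.mpr (Nat.pos_of_ne_zero h)))
      simp only [add_zero]
      rw [Finset.sum_range_succ, Finset.sum_range_succ', Finset.sum_eq_zero, hx0, hx2 (d+1) (by omega)]
      · simp
      · intro j hj
        rw [hx1 _ (by omega) (by simp at hj; omega), zero_mul]
  linarith

lemma phase (b : ℂ) : ∃ θ : ℂ, ‖θ‖ = 1 ∧ b = θ * ‖b‖ := by
  by_cases h : b = 0
  · exact ⟨1, by simp, by simp [h]⟩
  · have : (‖b‖ : ℂ) ≠ 0 := by simpa using h
    exact ⟨b / ‖b‖, by simp [h], by field_simp⟩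

lemma odd_b (a : ℕ → ℂ)
    (hc : ∀ (x : ℕ → ℂ) (N : ℕ), ∑ k ∈ Finset.range (N+1), ‖∑ j ∈ Finset.range (k+1), x j * a (k - j)‖^2
      ≤ ∑ j ∈ Finset.range (N+1), ‖x j‖^2) (n : ℕ) :
    ‖a (2*n+1)‖ ≤ 1 - ∑ k ∈ Finset.range (n+1), ‖a k‖^2 := by
  obtain ⟨θ, h1, h2⟩ := phase (a (2*n+1))
  have := gen a hc n n (fun i => θ * (starRingEnd ℂ) (a i))
  have e1 : ∑ i ∈ Finset.range (n+1), θ * (starRingEnd ℂ) (a i) * a i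
      = θ * ((∑ k ∈ Finset.range (n+1), ‖a k‖^2 : ℝ) : ℂ) := by
    push_cast
    rw [Finset.mul_sum]
    refine Finset.sum_congr rfl fun i _ => ?_
    rw [mul_assoc, Complex.conj_mul']
  have e2 : ∀ i, ‖θ * (starRingEnd ℂ) (a i)‖ = ‖a i‖ := by intro i; simp [h1]
  simp only [e1, e2] at this
  rw [show n+1+n = 2*n+1 by ring] at this
  set s := ∑ k ∈ Finset.range (n+1), ‖a k‖^2
  have hs0 : 0 ≤ s := Finset.sum_nonneg fun _ _ => by positivity
  have e3 : ‖a (2*n+1) + θ * (s:ℂ)‖ = ‖a (2*n+1)‖ + s := by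
    conv_lhs => rw [h2]
    rw [← mul_add, norm_mul, h1, one_mul, ← Complex.ofReal_add, Complex.norm_real, Real.norm_of_nonneg (by positivity)]
  rw [e3] at this
  have h4 : (0:ℝ) ≤ (if n = 0 then 0 else ‖a (n+1) + θ * (starRingEnd ℂ) (a n) * a 0‖^2) := by
    split_ifs <;> positivity
  have : (‖a (2*n+1)‖ + s)^2 ≤ 1 := by linarith
  have := abs_le_of_sq_le_sq' (by simpa using this : (‖a (2*n+1)‖ + s)^2 ≤ 1^2) zero_le_one
  linarith [this.2]

lemma even_b (a : ℕ → ℂ)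
    (hc : ∀ (x : ℕ → ℂ) (N : ℕ), ∑ k ∈ Finset.range (N+1), ‖∑ j ∈ Finset.range (k+1), x j * a (k - j)‖^2
      ≤ ∑ j ∈ Finset.range (N+1), ‖x j‖^2) (n : ℕ) :
    ‖a (2*n+2)‖ ≤ 1 - ∑ k ∈ Finset.range (n+1), ‖a k‖^2 - 1 / (1 + ‖a 0‖) * ‖a (n+1)‖^2 := by
  obtain ⟨θ, h1, h2⟩ := phase (a (2*n+2))
  set τ : ℝ := 1 / (1 + ‖a 0‖) with hτ
  have hτ0 : 0 ≤ τ := by positivity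
  have hτ1 : 1 - τ * ‖a 0‖ = τ := by rw [hτ]; field_simp; ring
  have := gen a hc n (n+1) (fun i => θ * (if i = n+1 then (τ:ℂ) else 1) * (starRingEnd ℂ) (a i))
  set s := ∑ k ∈ Finset.range (n+1), ‖a k‖^2
  have hs0 : 0 ≤ s := Finset.sum_nonneg fun _ _ => by positivity
  have e1 : ∑ i ∈ Finset.range (n+1+1), θ * (if i = n+1 then (τ:ℂ) else 1) * (starRingEnd ℂ) (a i) * a i
      = θ * ((s + τ * ‖a (n+1)‖^2 : ℝ) : ℂ) := by
    rw [Finset.sum_range_succ]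
    push_cast
    rw [mul_add, if_pos rfl, mul_assoc _ _ (a (n+1)), Complex.conj_mul']
    simp only [s]
    push_cast
    rw [Finset.mul_sum, ← mul_assoc]
    congr 1
    refine Finset.sum_congr rfl fun i hi => ?_
    rw [if_neg (by simp at hi; omega), mul_one, mul_assoc, Complex.conj_mul']
  have e2 : ∑ i ∈ Finset.range (n+1+1), ‖θ * (if i = n+1 then (τ:ℂ) else 1) * (starRingEnd ℂ) (a i)‖^2
      = s + (τ * ‖a (n+1)‖)^2 := by
    rw [Finset.sum_range_succ]
    congr 1
    · refine Finset.sum_congr rfl fun i hi => ?_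
      rw [if_neg (by simp at hi; omega)]; simp [h1]
    · simp [h1, abs_of_nonneg hτ0]
  have e4 : τ * ‖a (n+1)‖ ≤ ‖a (n+1) + θ * (τ:ℂ) * (starRingEnd ℂ) (a (n+1)) * a 0‖ := by
    have := norm_sub_le_norm_add (a (n+1)) (θ * (τ:ℂ) * (starRingEnd ℂ) (a (n+1)) * a 0)
    have h : ‖θ * (τ:ℂ) * (starRingEnd ℂ) (a (n+1)) * a 0‖ = τ * ‖a (n+1)‖ * ‖a 0‖ := by
      simp [h1, abs_of_nonneg hτ0]
    rw [h] at this
    have h' : ‖a (n+1)‖ - τ * ‖a (n+1)‖ * ‖a 0‖ = τ * ‖a (n+1)‖ := by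
      conv_rhs => rw [← hτ1]
      ring
    linarith
  have e5 := pow_le_pow_left₀ (by positivity) e4 2
  rw [e1, e2, if_neg (by omega), if_pos rfl, show n+1+(n+1) = 2*n+2 by ring] at this
  set q := s + τ * ‖a (n+1)‖^2 with hq
  have hq0 : 0 ≤ q := by positivity
  have e3 : ‖a (2*n+2) + θ * (q:ℂ)‖ = ‖a (2*n+2)‖ + q := by
    conv_lhs => rw [h2]
    rw [← mul_add, norm_mul, h1, one_mul, ← Complex.ofReal_add, Complex.norm_real, Real.norm_of_nonneg (by positivity)]
  rw [e3] at this
  have : (‖a (2*n+2)‖ + q)^2 ≤ 1 := by linarith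
  have := abs_le_of_sq_le_sq' (by simpa using this : (‖a (2*n+2)‖ + q)^2 ≤ 1^2) zero_le_one
  linarith [this.2]

/-- Finite refined Bohr inequality. -/
lemma fin_bohr (b : ℕ → ℝ) (hb : ∀ n, 0 ≤ b n) (τ : ℝ)
    (ho : ∀ n, b (2*n+1) ≤ 1 - ∑ k ∈ Finset.range (n+1), b k^2)
    (he : ∀ n, b (2*n+2) ≤ 1 - ∑ k ∈ Finset.range (n+1), b k^2 - τ * b (n+1)^2)
    (r : ℝ) (h0 : 0 ≤ r) (h1 : r < 1) (N : ℕ) :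
    ∑ n ∈ Finset.range (2*N), b (n+1) * r^(n+1)
      + (τ + r/(1-r)) * ∑ n ∈ Finset.range N, b (n+1)^2 * r^(2*(n+1)) ≤ (1 - b 0^2) * (r/(1-r)) := by
  have hr : 0 < 1 - r := by linarith
  have key : ∑ n ∈ Finset.range (2*N), b (n+1) * r^(n+1)
      + (τ + r/(1-r)) * ∑ n ∈ Finset.range N, b (n+1)^2 * r^(2*(n+1))
      + (1 - ∑ k ∈ Finset.range (N+1), b k^2) * (r^(2*N+1)/(1-r)) ≤ (1 - b 0^2) * (r/(1-r)) := by
    induction N with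
    | zero => simp
    | succ N ih =>
      refine le_trans ?_ ih
      rw [show 2*(N+1) = 2*N+1+1 by ring, Finset.sum_range_succ, Finset.sum_range_succ,
        Finset.sum_range_succ _ N, Finset.sum_range_succ _ (N+1)]
      have A := mul_le_mul_of_nonneg_right (ho N) (pow_nonneg h0 (2*N+1))
      have B := mul_le_mul_of_nonneg_right (he N) (pow_nonneg h0 (2*N+2))
      set s := ∑ k ∈ Finset.range (N+1), b k^2
      have e1 : r^(2*N+1)/(1-r) = r^(2*N+1) + r^(2*N+2) + r^(2*N+3)/(1-r) := by
        field_simp; ring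
      have e2 : r/(1-r) * r^(2*N+2) = r^(2*N+3)/(1-r) := by field_simp; ring
      rw [e1]
      have e3 : (τ + r/(1-r)) * (∑ n ∈ Finset.range N, b (n+1)^2 * r^(2*(n+1)) + b (N+1)^2 * r^(2*(N+1)))
        = (τ + r/(1-r)) * (∑ n ∈ Finset.range N, b (n+1)^2 * r^(2*(n+1))) + τ * b (N+1)^2 * r^(2*N+2)
          + b (N+1)^2 * (r^(2*N+3)/(1-r)) := by
        rw [← e2]; ring
      rw [e3]
      rw [show 2*N+1+1+1 = 2*N+3 by ring, show 2*N+1+1 = 2*N+2 by ring]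
      nlinarith [A, B]
  have : 0 ≤ (1 - ∑ k ∈ Finset.range (N+1), b k^2) * (r^(2*N+1)/(1-r)) := by
    have := (hb _).trans (ho N)
    positivity
  linarith

set_option maxHeartbeats 1000000 in
theorem stmt14 (f : ℂ → ℂ) (a : ℕ → ℂ)
    (hf : DifferentiableOn ℂ f (Metric.ball 0 1))
    (hb : ∀ z ∈ Metric.ball (0 : ℂ) 1, ‖f z‖ ≤ 1)
    (hs : ∀ z ∈ Metric.ball (0 : ℂ) 1, HasSum (fun n => a n * z ^ n) (f z))
    (r : ℝ) (hr0 : 0 ≤ r) (hr : r ≤ 1 / 3) :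
    (∑' n : ℕ, ‖a n‖ * r ^ n)
      + (1 / (1 + ‖a 0‖) + r / (1 - r)) * ∑' n : ℕ, ‖a (n + 1)‖ ^ 2 * r ^ (2 * (n + 1))
      + 8 / 9 * ∑' n : ℕ, (n : ℝ) * ‖a n‖ ^ 2 * r ^ (2 * n)
      ≤ 1 := by
  have hc := contr f a hb hs
  have ho := odd_b a hc
  have he := even_b a hc
  have hr1 : r < 1 := by linarith
  have hr2 : 0 < 1 - r := by linarith
  have hq1 : r^2 < 1 := by nlinarith
  have hsub : ∀ n, ‖a 0‖^2 ≤ ∑ k ∈ Finset.range (n+1), ‖a k‖^2 := fun n =>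
    Finset.single_le_sum (f := fun k => ‖a k‖^2) (fun _ _ => by positivity) (by simp)
  have hbd : ∀ n, ‖a (n+1)‖ ≤ 1 - ‖a 0‖^2 := by
    intro n
    rcases Nat.even_or_odd' n with ⟨m, rfl | rfl⟩
    · linarith [ho m, hsub m]
    · have : 0 ≤ 1 / (1 + ‖a 0‖) * ‖a (m+1)‖^2 := by positivity
      linarith [he m, hsub m]
  have ha0 : ‖a 0‖ ≤ 1 := by
    have := (norm_nonneg _).trans (hbd 0)
    nlinarith [norm_nonneg (a 0)]
  have hle1 : ∀ n, ‖a n‖ ≤ 1 := by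
    intro n
    cases n with
    | zero => exact ha0
    | succ n => exact (hbd n).trans (by nlinarith [norm_nonneg (a 0)])
  have hle2 : ∀ n, ‖a n‖^2 ≤ 1 := fun n => pow_le_one₀ (norm_nonneg _) (hle1 n)
  have s1 : Summable (fun n => ‖a n‖ * r^n) :=
    Summable.of_nonneg_of_le (fun n => by positivity)
      (fun n => mul_le_of_le_one_left (by positivity) (hle1 n)) (summable_geometric_of_lt_one hr0 hr1)
  have s2' : Summable (fun n => ‖a n‖^2 * r^(2*n)) :=
    Summable.of_nonneg_of_le (fun n => by positivity)
      (fun n => by rw [pow_mul]; exact mul_le_of_le_one_left (by positivity) (hle2 n))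
      (summable_geometric_of_lt_one (by positivity) hq1)
  have s2 : Summable (fun n => ‖a (n+1)‖^2 * r^(2*(n+1))) := (summable_nat_add_iff 1).mpr s2'
  have s1' : Summable (fun n => ‖a (n+1)‖ * r^(n+1)) := (summable_nat_add_iff 1).mpr s1
  have hB : (∑' n, ‖a (n+1)‖ * r^(n+1))
      + (1 / (1 + ‖a 0‖) + r / (1 - r)) * ∑' n : ℕ, ‖a (n + 1)‖ ^ 2 * r ^ (2 * (n + 1))
      ≤ (1 - ‖a 0‖^2) * (r/(1-r)) := by
    have t1 := s1'.hasSum.tendsto_sum_nat.comp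
      (Filter.tendsto_id.const_mul_atTop' (show 0 < 2 by norm_num))
    have t2 := s2.hasSum.tendsto_sum_nat.const_mul (1 / (1 + ‖a 0‖) + r / (1 - r))
    refine le_of_tendsto' (t1.add t2) fun N => ?_
    exact fin_bohr (fun n => ‖a n‖) (fun _ => norm_nonneg _) _ ho he r hr0 hr1 N
  have hA := hasSum_coe_mul_geometric_of_norm_lt_one (r := r^2) (by rw [Real.norm_of_nonneg (by positivity)]; exact hq1)
  have hS : ∑' n : ℕ, (n : ℝ) * ‖a n‖ ^ 2 * r ^ (2 * n) ≤ (1 - ‖a 0‖^2)^2 * (r^2/(1-r^2)^2) := by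
    have hle : ∀ n : ℕ, (n : ℝ) * ‖a n‖ ^ 2 * r ^ (2 * n) ≤ (1 - ‖a 0‖^2)^2 * (n * (r^2)^n) := by
      intro n
      cases n with
      | zero => simp
      | succ n =>
        have := pow_le_pow_left₀ (norm_nonneg _) (hbd n) 2
        rw [pow_mul]
        have h3 : 0 ≤ ((n+1 : ℕ):ℝ) * (r^2)^(n+1) := by positivity
        nlinarith [mul_le_mul_of_nonneg_right this h3]
    have hA' := hA.mul_left ((1 - ‖a 0‖^2)^2)
    rw [← hA'.tsum_eq]
    exact (Summable.of_nonneg_of_le (fun n => by positivity) hle hA'.summable).tsum_le_tsum hle hA'.summable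
  rw [s1.tsum_eq_zero_add, pow_zero, mul_one]
  have g1 : r/(1-r) ≤ 1/2 := by rw [div_le_iff₀ hr2]; linarith
  have g2 : r^2/(1-r^2)^2 ≤ 9/64 := by
    have : r/(1-r^2) ≤ 3/8 := by rw [div_le_iff₀ (by linarith)]; nlinarith
    rw [← div_pow]
    have h := pow_le_pow_left₀ (div_nonneg hr0 (by linarith)) this 2
    linarith
  set A := ‖a 0‖
  have hA0 : 0 ≤ A := norm_nonneg _
  have k1 : (1 - A^2) * (r/(1-r)) ≤ (1 - A^2) * (1/2) :=
    mul_le_mul_of_nonneg_left g1 (by nlinarith)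
  have k2 : (1 - A^2)^2 * (r^2/(1-r^2)^2) ≤ (1 - A^2)^2 * (9/64) :=
    mul_le_mul_of_nonneg_left g2 (by positivity)
  have k3 : (1 - A^2)^2 ≤ 4 * (1-A)^2 := by
    have : (1-A^2)^2 = (1+A)^2 * (1-A)^2 := by ring
    rw [this]
    exact mul_le_mul_of_nonneg_right (by nlinarith) (by positivity)
  linarith
end

section
/- For every r with 0 ≤ r ≤ 1/(3 - |a_0|): |a_0|² + ∑_{n=1}^∞ |a_n| r^n + (1/(1+|a_0|) + r/(1-r)) · ∑_{n=1}^∞ |a_n|² r^{2n} + (9/8) · ∑_{n=1}^∞ n |a_n|² r^{2n} ≤ 1. -/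
open Finset

lemma parseval_aux (c : ℕ → ℂ) (hc : Summable fun k => ‖c k‖) :
    ∃ F : C(AddCircle (1:ℝ), ℂ), (∀ x, HasSum (fun k => c k * (fourier (T := (1:ℝ)) 1 x) ^ k) (F x)) ∧
      HasSum (fun k => ‖c k‖ ^ 2) (‖ContinuousMap.toLp (E := ℂ) 2 AddCircle.haarAddCircle ℂ F‖ ^ 2) := by
  have : Fact ((0:ℝ) < 1) := ⟨one_pos⟩
  have hsum : Summable (fun k : ℕ => c k • (fourier (T := (1:ℝ)) (k:ℤ))) := by
    apply Summable.of_norm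
    simpa [norm_smul, fourier_norm] using hc
  obtain ⟨F, hF⟩ := hsum
  refine ⟨F, ?_, ?_⟩
  · intro x
    have h1 := ((ContinuousMap.evalCLM ℂ x : C(AddCircle (1:ℝ), ℂ) →L[ℂ] ℂ)).hasSum hF
    convert h1 using 2 with k
    · simp [fourier_apply, AddCircle.toCircle_nsmul]
    · rfl
  · have h1 := (ContinuousMap.toLp (E := ℂ) 2 (AddCircle.haarAddCircle (T := (1:ℝ))) ℂ).hasSum hF
    have h2 : Filter.Tendsto (fun N => ‖∑ k ∈ range N, c k • fourierLp (T := (1:ℝ)) 2 (k:ℤ)‖ ^ 2) Filter.atTop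
        (nhds (‖ContinuousMap.toLp (E := ℂ) 2 AddCircle.haarAddCircle ℂ F‖ ^ 2)) := by
      have := (h1.tendsto_sum_nat.norm).pow 2
      refine this.congr fun N => ?_
      simp [fourierLp]
    rw [hasSum_iff_tendsto_nat_of_nonneg (fun i => by positivity)]
    refine h2.congr fun N => ?_
    have ho : Orthonormal ℂ (fun k : ℕ => fourierLp (T := (1:ℝ)) 2 (k:ℤ)) :=
      orthonormal_fourier.comp _ Nat.cast_injective
    have := ho.inner_sum c c (range N)
    rw [inner_self_eq_norm_sq_to_K] at this
    have h3 : ((‖∑ k ∈ range N, c k • fourierLp (T := (1:ℝ)) 2 (k:ℤ)‖ ^ 2 : ℝ) : ℂ)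
        = ((∑ k ∈ range N, ‖c k‖ ^ 2 : ℝ) : ℂ) := by
      push_cast
      refine Eq.trans this ?_
      refine sum_congr rfl fun k _ => ?_
      rw [mul_comm, Complex.mul_conj']
    exact_mod_cast h3

lemma l2_le (c d : ℕ → ℂ) (hc : Summable fun k => ‖c k‖) (hd : Summable fun k => ‖d k‖)
    (h : ∀ z : ℂ, ‖z‖ = 1 → ‖∑' k, c k * z ^ k‖ ≤ ‖∑' k, d k * z ^ k‖) :
    (∑' k, ‖c k‖ ^ 2) ≤ ∑' k, ‖d k‖ ^ 2 := by
  have : Fact ((0:ℝ) < 1) := ⟨one_pos⟩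
  obtain ⟨F, hF, hF2⟩ := parseval_aux c hc
  obtain ⟨G, hG, hG2⟩ := parseval_aux d hd
  rw [hF2.tsum_eq, hG2.tsum_eq]
  gcongr
  apply MeasureTheory.Lp.norm_le_norm_of_ae_le
  filter_upwards [ContinuousMap.coeFn_toLp (p := 2) (𝕜 := ℂ) AddCircle.haarAddCircle F,
    ContinuousMap.coeFn_toLp (p := 2) (𝕜 := ℂ) AddCircle.haarAddCircle G] with x h1 h2
  rw [h1, h2, ← (hF x).tsum_eq, ← (hG x).tsum_eq]
  apply h
  rw [fourier_apply]
  exact Circle.norm_coe _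

lemma contraction (f : ℂ → ℂ) (a : ℕ → ℂ)
    (hb : ∀ z ∈ Metric.ball (0 : ℂ) 1, ‖f z‖ ≤ 1)
    (hs : ∀ z ∈ Metric.ball (0 : ℂ) 1, HasSum (fun n => a n * z ^ n) (f z))
    (g : ℕ → ℂ) (K : ℕ) (hg : ∀ k, K ≤ k → g k = 0) :
    ∑ k ∈ range K, ‖∑ i ∈ range (k + 1), g i * a (k - i)‖ ^ 2 ≤ ∑ k ∈ range K, ‖g k‖ ^ 2 := by
  have key : ∀ ρ : ℝ, 0 ≤ ρ → ρ < 1 →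
      ∑ k ∈ range K, (‖∑ i ∈ range (k + 1), g i * a (k - i)‖ * ρ ^ k) ^ 2
        ≤ ∑ k ∈ range K, (‖g k‖ * ρ ^ k) ^ 2 := by
    intro ρ h0 h1
    have hsa : Summable fun k => ‖a k * (ρ:ℂ) ^ k‖ := by
      apply Summable.norm
      exact (hs ρ (by simp [abs_of_nonneg h0, h1])).summable
    have hsg : Summable fun k => ‖g k * (ρ:ℂ) ^ k‖ := by
      apply summable_of_ne_finset_zero (s := range K)
      intro k hk
      simp [hg k (by simpa using hk)]
    have hcs := summable_norm_sum_mul_range_of_summable_norm hsg hsa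
    have hid : ∀ n, ∑ k ∈ range (n + 1), g k * (ρ:ℂ) ^ k * (a (n - k) * (ρ:ℂ) ^ (n - k))
        = (∑ i ∈ range (n + 1), g i * a (n - i)) * (ρ:ℂ) ^ n := by
      intro n
      rw [sum_mul]
      refine sum_congr rfl fun k hk => ?_
      have : (ρ:ℂ) ^ n = ρ ^ k * ρ ^ (n - k) := by
        rw [← pow_add]; congr 1; have := mem_range.1 hk; omega
      rw [this]; ring
    simp_rw [hid] at hcs
    have hm := l2_le _ _ hcs hsg (by
      intro z hz
      have hz1 : (ρ * z : ℂ) ∈ Metric.ball (0:ℂ) 1 := by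
        simp [hz, abs_of_nonneg h0, h1]
      have e1 : ∑' k, (∑ i ∈ range (k + 1), g i * a (k - i)) * (ρ:ℂ) ^ k * z ^ k
          = (∑' k, g k * (ρ:ℂ) ^ k * z ^ k) * ∑' k, a k * (ρ * z) ^ k := by
        rw [tsum_mul_tsum_eq_tsum_sum_range_of_summable_norm]
        · refine tsum_congr fun n => ?_
          rw [← hid, sum_mul]
          refine sum_congr rfl fun k hk => ?_
          have : z ^ n = z ^ k * z ^ (n - k) := by
            rw [← pow_add]; congr 1; have := mem_range.1 hk; omega
          rw [this]; ring
        · simpa [hz] using hsg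
        · simpa [hz] using hsa
      rw [e1, norm_mul, (hs _ hz1).tsum_eq]
      exact mul_le_of_le_one_right (norm_nonneg _) (hb _ hz1))
    have hsq : Summable fun k => ‖(∑ i ∈ range (k + 1), g i * a (k - i)) * (ρ:ℂ) ^ k‖ ^ 2 :=
      (parseval_aux _ hcs).choose_spec.2.summable
    rw [tsum_eq_sum (f := fun k => ‖g k * (ρ:ℂ) ^ k‖ ^ 2) (s := range K)
      (by intro k hk; simp [hg k (by simpa using hk)])] at hm
    have := (hsq.sum_le_tsum (range K) (fun i _ => by positivity)).trans hm
    simpa [abs_of_nonneg h0] using this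
  have hev : ∀ᶠ ρ in nhdsWithin (1:ℝ) (Set.Iio 1), 0 ≤ ρ ∧ ρ < 1 := by
    filter_upwards [self_mem_nhdsWithin, nhdsWithin_le_nhds (lt_mem_nhds (zero_lt_one : (0:ℝ) < 1))] with x h1 h2
    exact ⟨h2.le, h1⟩
  have hl : ∀ w : ℕ → ℝ, Filter.Tendsto (fun ρ : ℝ => ∑ k ∈ range K, (w k * ρ ^ k) ^ 2)
      (nhdsWithin (1:ℝ) (Set.Iio 1)) (nhds (∑ k ∈ range K, w k ^ 2)) := by
    intro w
    have hc : Continuous (fun ρ : ℝ => ∑ k ∈ range K, (w k * ρ ^ k) ^ 2) := by fun_prop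
    have := (hc.tendsto 1).mono_left (nhdsWithin_le_nhds (s := Set.Iio 1))
    simpa using this
  exact le_of_tendsto_of_tendsto (hl _) (hl _) (hev.mono fun ρ h => key ρ h.1 h.2)

lemma carlson_aux (f : ℂ → ℂ) (a : ℕ → ℂ)
    (hb : ∀ z ∈ Metric.ball (0 : ℂ) 1, ‖f z‖ ≤ 1)
    (hs : ∀ z ∈ Metric.ball (0 : ℂ) 1, HasSum (fun n => a n * z ^ n) (f z))
    (p q : ℕ) (hq : 1 ≤ q) (β μ : ℂ) (hμ : ‖μ‖ = 1) (hp : 1 ≤ p ∨ β = 0) :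
    ∑ k ∈ range p, ‖a k‖ ^ 2 + ‖a p + β * a 0‖ ^ 2
      + ‖a (p + q) + β * a q + μ * ((∑ k ∈ range q, ‖a k‖ ^ 2 : ℝ) : ℂ)‖ ^ 2
      ≤ 1 + ‖β‖ ^ 2 + ∑ k ∈ range q, ‖a k‖ ^ 2 := by
  set g : ℕ → ℂ := fun i => ((if i = 0 then 1 else 0) + (if i = p then β else 0))
    + (if p < i ∧ i ≤ p + q then μ * star (a (p + q - i)) else 0) with hgdef
  have hc := contraction f a hb hs g (p + q + 1) (by
    intro k hk
    have h1 : k ≠ 0 := by omega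
    have h2 : k ≠ p := by omega
    have h3 : ¬ (p < k ∧ k ≤ p + q) := by omega
    simp only [hgdef, if_neg h1, if_neg h2, if_neg h3]; simp)
  have hk : ∀ k, ∑ i ∈ range (k + 1), g i * a (k - i) = a k + (if p ≤ k then β * a (k - p) else 0)
      + ∑ i ∈ range (k + 1), (if p < i ∧ i ≤ p + q then μ * star (a (p + q - i)) * a (k - i) else 0) := by
    intro k
    simp only [hgdef, add_mul, sum_add_distrib, ite_mul, zero_mul, one_mul]
    simp [Finset.sum_ite_eq']
  have hlow : ∀ k ≤ p, ∑ i ∈ range (k + 1),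
      (if p < i ∧ i ≤ p + q then μ * star (a (p + q - i)) * a (k - i) else 0) = 0 := by
    intro k hkp
    refine sum_eq_zero fun i hi => if_neg ?_
    have := mem_range.1 hi; omega
  have hrefl : ∀ w : ℕ → ℝ, ∑ x ∈ range q, w (q - 1 - x) = ∑ x ∈ range q, w x :=
    fun w => sum_range_reflect w q
  have hpq : p + q + 1 = (p + 1) + q := by ring
  have htop : ∑ i ∈ range (p + q + 1),
      (if p < i ∧ i ≤ p + q then μ * star (a (p + q - i)) * a (p + q - i) else 0)
      = μ * ((∑ k ∈ range q, ‖a k‖ ^ 2 : ℝ) : ℂ) := by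
    rw [hpq, sum_range_add, sum_eq_zero, zero_add, ← hrefl]
    · push_cast
      rw [mul_sum]
      refine sum_congr rfl fun k hk => ?_
      have hk' := mem_range.1 hk
      rw [if_pos (by omega), show p + q - (p + 1 + k) = q - 1 - k by omega, mul_assoc,
        mul_comm (star _), ← Complex.mul_conj']
      rfl
    · intro i hi
      have := mem_range.1 hi
      exact if_neg (by omega)
  have hG : ∑ k ∈ range (p + q + 1), ‖g k‖ ^ 2 = 1 + ‖β‖ ^ 2 + ∑ k ∈ range q, ‖a k‖ ^ 2 := by
    rw [hpq, sum_range_add, ← hrefl (fun k => ‖a k‖ ^ 2)]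
    congr 1
    · have : ∀ i ∈ range (p + 1), ‖g i‖ ^ 2 = (if i = 0 then 1 else 0) + (if i = p then ‖β‖ ^ 2 else 0) := by
        intro i hi
        have hi' := mem_range.1 hi
        simp only [hgdef]
        rw [if_neg (show ¬ (p < i ∧ i ≤ p + q) by omega), add_zero]
        rcases hp with hp | hp
        · by_cases h0 : i = 0
          · have h1 : i ≠ p := by omega
            simp [if_pos h0, if_neg h1]
          · by_cases h1 : i = p
            · rw [if_neg h0, if_neg h0, if_pos h1, if_pos h1]; simp
            · simp [h0, h1]
        · by_cases h0 : i = 0 <;> simp [h0, hp]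
      rw [sum_congr rfl this, sum_add_distrib]
      simp
    · refine sum_congr rfl fun k hk => ?_
      have hk' := mem_range.1 hk
      simp only [hgdef]
      rw [if_neg (by omega), if_neg (by omega), if_pos (by omega),
        show p + q - (p + 1 + k) = q - 1 - k by omega]
      simp [hμ]
  rw [hG] at hc
  refine le_trans ?_ hc
  have hsub : ∑ k ∈ range (p + 1), ‖∑ i ∈ range (k + 1), g i * a (k - i)‖ ^ 2
      + ‖∑ i ∈ range (p + q + 1), g i * a (p + q - i)‖ ^ 2
      ≤ ∑ k ∈ range (p + q + 1), ‖∑ i ∈ range (k + 1), g i * a (k - i)‖ ^ 2 := by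
    rw [sum_range_succ (fun k => ‖∑ i ∈ range (k + 1), g i * a (k - i)‖ ^ 2) (p + q)]
    refine add_le_add (sum_le_sum_of_subset_of_nonneg ?_ fun i _ _ => by positivity) le_rfl
    exact range_subset_range.2 (by omega)
  refine le_trans (le_of_eq ?_) hsub
  rw [sum_range_succ, hk (p + q), htop, hk p, hlow p le_rfl]
  congr 1
  · congr 1
    · refine sum_congr rfl fun k hkp => ?_
      have hkp' := mem_range.1 hkp
      rw [hk, hlow k hkp'.le, if_neg (by omega)]
      simp
    · simp
  · simp

lemma exists_phase (w : ℂ) : ∃ μ : ℂ, ‖μ‖ = 1 ∧ w = μ * (‖w‖ : ℂ) := by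
  by_cases h : w = 0
  · exact ⟨1, by simp, by simp [h]⟩
  · refine ⟨w / ‖w‖, by simp [h], ?_⟩
    have : (‖w‖ : ℂ) ≠ 0 := by simpa using h
    field_simp

lemma carlson_odd (f : ℂ → ℂ) (a : ℕ → ℂ)
    (hb : ∀ z ∈ Metric.ball (0 : ℂ) 1, ‖f z‖ ≤ 1)
    (hs : ∀ z ∈ Metric.ball (0 : ℂ) 1, HasSum (fun n => a n * z ^ n) (f z)) (n : ℕ) :
    ‖a (2 * n + 1)‖ + ∑ k ∈ range (n + 1), ‖a k‖ ^ 2 ≤ 1 := by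
  obtain ⟨μ, hμ, hw⟩ := exists_phase (a (2 * n + 1))
  have h := carlson_aux f a hb hs n (n + 1) (by omega) 0 μ hμ (Or.inr rfl)
  rw [show n + (n + 1) = 2 * n + 1 by ring] at h
  set S := ∑ k ∈ range (n + 1), ‖a k‖ ^ 2 with hS
  have hS0 : 0 ≤ S := sum_nonneg fun i _ => by positivity
  have e : ‖a (2 * n + 1) + 0 * a (n + 1) + μ * (S : ℂ)‖ = ‖a (2 * n + 1)‖ + S := by
    have : a (2 * n + 1) + 0 * a (n + 1) + μ * (S : ℂ) = μ * ((‖a (2 * n + 1)‖ + S : ℝ) : ℂ) := by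
      conv_lhs => rw [hw]
      push_cast; ring
    rw [this, norm_mul, hμ, one_mul, Complex.norm_real, Real.norm_of_nonneg (by positivity)]
  rw [e] at h
  have : ∑ k ∈ range n, ‖a k‖ ^ 2 + ‖a n + 0 * a 0‖ ^ 2 = S := by
    rw [hS, sum_range_succ]; simp
  rw [this] at h
  simp only [norm_zero] at h
  have h5 : 0 ≤ ‖a (2 * n + 1)‖ := norm_nonneg _
  nlinarith

lemma carlson_even (f : ℂ → ℂ) (a : ℕ → ℂ)
    (hb : ∀ z ∈ Metric.ball (0 : ℂ) 1, ‖f z‖ ≤ 1)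
    (hs : ∀ z ∈ Metric.ball (0 : ℂ) 1, HasSum (fun n => a n * z ^ n) (f z)) (n : ℕ) (hn : 1 ≤ n) :
    ‖a (2 * n)‖ + ∑ k ∈ range n, ‖a k‖ ^ 2 + ‖a n‖ ^ 2 / (1 + ‖a 0‖) ≤ 1 := by
  obtain ⟨μ, hμ, hw⟩ := exists_phase (a (2 * n))
  obtain ⟨ν, hν, hv⟩ := exists_phase (a n)
  have hpos : 0 < 1 + ‖a 0‖ := by positivity
  set b := ‖a n‖ / (1 + ‖a 0‖) with hbdef
  have hb0 : 0 ≤ b := by positivity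
  have hbb : b * (1 + ‖a 0‖) = ‖a n‖ := by rw [hbdef]; field_simp
  have hβ : ‖μ * star ν * (b : ℂ)‖ = b := by
    rw [norm_mul, norm_mul, norm_star, hμ, hν, Complex.norm_real, Real.norm_of_nonneg hb0]; ring
  have h := carlson_aux f a hb hs n n hn (μ * star ν * (b : ℂ)) μ hμ (Or.inl hn)
  rw [show n + n = 2 * n by ring] at h
  set S := ∑ k ∈ range n, ‖a k‖ ^ 2 with hS
  have hS0 : 0 ≤ S := sum_nonneg fun i _ => by positivity
  have hνν : star ν * ν = 1 := by
    have := Complex.conj_mul' ν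
    rw [hν] at this
    simpa using this
  have e : ‖a (2 * n) + μ * star ν * (b : ℂ) * a n + μ * (S : ℂ)‖ = ‖a (2 * n)‖ + b * ‖a n‖ + S := by
    have : a (2 * n) + μ * star ν * (b : ℂ) * a n + μ * (S : ℂ)
        = μ * ((‖a (2 * n)‖ + b * ‖a n‖ + S : ℝ) : ℂ) := by
      have h2 : star ν * a n = (‖a n‖ : ℂ) := by
        conv_lhs => rw [hv]
        rw [← mul_assoc, hνν, one_mul]
      have h3 : μ * star ν * (b : ℂ) * a n = μ * b * (‖a n‖ : ℂ) := by rw [← h2]; ring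
      rw [h3]
      conv_lhs => rw [hw]
      push_cast; ring
    rw [this, norm_mul, hμ, one_mul, Complex.norm_real, Real.norm_of_nonneg (by positivity)]
  rw [e, hβ] at h
  have hlow : b ≤ ‖a n + μ * star ν * (b : ℂ) * a 0‖ := by
    have h1 := norm_sub_le (a n + μ * star ν * (b : ℂ) * a 0) (μ * star ν * (b : ℂ) * a 0)
    rw [add_sub_cancel_right, norm_mul _ (a 0), hβ] at h1
    linarith
  have hlow2 : b ^ 2 ≤ ‖a n + μ * star ν * (b : ℂ) * a 0‖ ^ 2 := by gcongr
  have h5 : 0 ≤ ‖a (2 * n)‖ := norm_nonneg _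
  have h6 : ‖a n‖ ^ 2 / (1 + ‖a 0‖) = b * ‖a n‖ := by rw [hbdef]; ring
  have h7 : 0 ≤ b * ‖a n‖ := by positivity
  rw [h6]
  nlinarith

lemma partial_bound (x : ℕ → ℝ) (r A : ℝ) (hr0 : 0 ≤ r) (hr1 : r < 1) (hA : 0 ≤ A)
    (hodd : ∀ n, x (2 * n + 1) + ∑ k ∈ range n, x (k + 1) ^ 2 ≤ 1 - A ^ 2)
    (heven : ∀ n, x (2 * n + 2) + ∑ k ∈ range n, x (k + 1) ^ 2 + x (n + 1) ^ 2 / (1 + A) ≤ 1 - A ^ 2)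
    (N : ℕ) :
    (1 - r) * (∑ i ∈ range (2 * N), x (i + 1) * r ^ (i + 1)
      + 1 / (1 + A) * ∑ i ∈ range N, x (i + 1) ^ 2 * r ^ (2 * (i + 1)))
      + (r * (∑ i ∈ range N, x (i + 1) ^ 2 * r ^ (2 * (i + 1)))
        - r ^ (2 * N + 1) * ∑ i ∈ range N, x (i + 1) ^ 2)
      ≤ (1 - A ^ 2) * (r - r ^ (2 * N + 1)) := by
  induction N with
  | zero => simp
  | succ N ih =>
    have h1 := mul_le_mul_of_nonneg_left (hodd N) (show 0 ≤ (1 - r) * r ^ (2 * N + 1) by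
      have : 0 ≤ 1 - r := by linarith
      positivity)
    have h2 := mul_le_mul_of_nonneg_left (heven N) (show 0 ≤ (1 - r) * r ^ (2 * N + 2) by
      have : 0 ≤ 1 - r := by linarith
      positivity)
    rw [show 2 * (N + 1) = 2 * N + 1 + 1 by ring, sum_range_succ _ (2 * N + 1), sum_range_succ _ (2 * N),
      sum_range_succ _ N, sum_range_succ _ N]
    rw [show 2 * (N + 1) = 2 * N + 1 + 1 by ring]
    rw [div_eq_mul_one_div] at h2
    simp only [pow_succ _ (2 * N + 1), pow_succ _ (2 * N + 1 + 1)] at *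
    linear_combination ih + h1 + h2

/-- Theorem 4, second part: for a bounded analytic self-map `f` of the unit
disk with coefficients `a n`, and `0 ≤ r ≤ 1/(3-|a₀|)`:
`|a₀|² + ∑_{n=1}^∞ |aₙ| rⁿ + (1/(1+|a₀|) + r/(1-r)) ∑_{n=1}^∞ |aₙ|² r^{2n}
  + (9/8) ∑_{n=1}^∞ n |aₙ|² r^{2n} ≤ 1`
(the last sum equals `S_r/π`, the area quantity). -/
theorem stmt15 (f : ℂ → ℂ) (a : ℕ → ℂ)
    (hf : DifferentiableOn ℂ f (Metric.ball 0 1))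
    (hb : ∀ z ∈ Metric.ball (0 : ℂ) 1, ‖f z‖ ≤ 1)
    (hs : ∀ z ∈ Metric.ball (0 : ℂ) 1, HasSum (fun n => a n * z ^ n) (f z))
    (r : ℝ) (hr0 : 0 ≤ r) (hr : r ≤ 1 / (3 - ‖a 0‖)) :
    ‖a 0‖ ^ 2 + (∑' n : ℕ, ‖a (n + 1)‖ * r ^ (n + 1))
      + (1 / (1 + ‖a 0‖) + r / (1 - r)) * ∑' n : ℕ, ‖a (n + 1)‖ ^ 2 * r ^ (2 * (n + 1))
      + 9 / 8 * ∑' n : ℕ, (n : ℝ) * ‖a n‖ ^ 2 * r ^ (2 * n)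
      ≤ 1 := by
  have hodd : ∀ n, ‖a (2 * n + 1)‖ + ∑ k ∈ range n, ‖a (k + 1)‖ ^ 2 ≤ 1 - ‖a 0‖ ^ 2 := by
    intro n
    have := carlson_odd f a hb hs n
    rw [sum_range_succ'] at this
    linarith
  have heven : ∀ n, ‖a (2 * n + 2)‖ + ∑ k ∈ range n, ‖a (k + 1)‖ ^ 2
      + ‖a (n + 1)‖ ^ 2 / (1 + ‖a 0‖) ≤ 1 - ‖a 0‖ ^ 2 := by
    intro n
    have := carlson_even f a hb hs (n + 1) (by omega)
    rw [sum_range_succ'] at this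
    rw [show 2 * n + 2 = 2 * (n + 1) by ring]
    linarith
  have hA0 : 0 ≤ ‖a 0‖ := norm_nonneg _
  have hB : ∀ n, ‖a (n + 1)‖ ≤ 1 - ‖a 0‖ ^ 2 := by
    intro n
    have hnn : ∀ m, 0 ≤ ∑ k ∈ range m, ‖a (k + 1)‖ ^ 2 := fun m => sum_nonneg fun i _ => by positivity
    rcases Nat.even_or_odd' n with ⟨m, rfl | rfl⟩
    · linarith [hodd m, hnn m]
    · have : 0 ≤ ‖a (m + 1)‖ ^ 2 / (1 + ‖a 0‖) := by positivity
      have h2 := heven m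
      rw [show 2 * m + 2 = 2 * m + 1 + 1 by ring] at h2
      linarith [hnn m]
  have hP : ∀ N, ∑ k ∈ range N, ‖a (k + 1)‖ ^ 2 ≤ 1 - ‖a 0‖ ^ 2 := fun N => by
    linarith [hodd N, norm_nonneg (a (2 * N + 1))]
  have hA2 : 0 ≤ 1 - ‖a 0‖ ^ 2 := by simpa using hP 0
  have hpart := fun hr1 => partial_bound (fun n => ‖a n‖) r ‖a 0‖ hr0 hr1 hA0 hodd heven
  generalize ‖a 0‖ = A at *
  have hA1 : A ≤ 1 := by nlinarith
  have hr2 : r * (3 - A) ≤ 1 := by rwa [le_div_iff₀ (by linarith)] at hr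
  have hrh : r ≤ 1 / 2 := by nlinarith
  have hr1 : r < 1 := by linarith
  have hsq : r ^ 2 < 1 := by nlinarith
  have s1 : Summable fun n : ℕ => ‖a (n + 1)‖ * r ^ (n + 1) := by
    refine Summable.of_nonneg_of_le (fun n => by positivity)
      (fun n => mul_le_mul_of_nonneg_right (hB n) (by positivity)) ?_
    exact ((summable_nat_add_iff 1).2 (summable_geometric_of_lt_one hr0 hr1)).mul_left _
  have s2 : Summable fun n : ℕ => ‖a (n + 1)‖ ^ 2 * r ^ (2 * (n + 1)) := by
    refine Summable.of_nonneg_of_le (fun n => by positivity)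
      (fun n => mul_le_mul_of_nonneg_right (pow_le_pow_left₀ (norm_nonneg _) (hB n) 2) (by positivity)) ?_
    simp_rw [pow_mul]
    exact ((summable_nat_add_iff 1).2 (summable_geometric_of_lt_one (sq_nonneg r) hsq)).mul_left _
  have harea : ∑' n : ℕ, (n : ℝ) * ‖a n‖ ^ 2 * r ^ (2 * n)
      ≤ (1 - A ^ 2) ^ 2 * (r ^ 2 / (1 - r ^ 2) ^ 2) := by
    have hn : ‖r ^ 2‖ < 1 := by rwa [Real.norm_of_nonneg (sq_nonneg r)]
    have hh := (hasSum_coe_mul_geometric_of_norm_lt_one hn).mul_left ((1 - A ^ 2) ^ 2)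
    have hle : ∀ n : ℕ, (n : ℝ) * ‖a n‖ ^ 2 * r ^ (2 * n) ≤ (1 - A ^ 2) ^ 2 * (n * (r ^ 2) ^ n) := by
      intro n
      cases n with
      | zero => simp
      | succ n =>
        have := pow_le_pow_left₀ (norm_nonneg _) (hB n) 2
        have h3 : 0 ≤ ((n + 1 : ℕ) : ℝ) * r ^ (2 * (n + 1)) := by positivity
        rw [← pow_mul]
        nlinarith
    rw [← hh.tsum_eq]
    exact Summable.tsum_le_tsum hle
      (Summable.of_nonneg_of_le (fun n => by positivity) hle hh.summable) hh.summable
  set T1 := ∑' n : ℕ, ‖a (n + 1)‖ * r ^ (n + 1)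
  set T2 := ∑' n : ℕ, ‖a (n + 1)‖ ^ 2 * r ^ (2 * (n + 1))
  have hmain : (1 - r) * (T1 + 1 / (1 + A) * T2) + r * T2 ≤ (1 - A ^ 2) * r := by
    have t1 : Filter.Tendsto (fun N : ℕ => ∑ i ∈ range (2 * N), ‖a (i + 1)‖ * r ^ (i + 1)) Filter.atTop (nhds T1) :=
      s1.hasSum.tendsto_sum_nat.comp (Filter.tendsto_id.const_mul_atTop' (by norm_num))
    have t2 := s2.hasSum.tendsto_sum_nat
    refine le_of_tendsto' (((t1.add (t2.const_mul (1 / (1 + A)))).const_mul (1 - r)).add (t2.const_mul r)) ?_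
    intro N
    have h1 := hpart hr1 N
    have h2 := mul_le_mul_of_nonneg_left (hP N) (show 0 ≤ r ^ (2 * N + 1) by positivity)
    linarith
  have h1r : 0 < 1 - r := by linarith
  have hmain2 : T1 + (1 / (1 + A) + r / (1 - r)) * T2 ≤ (1 - A ^ 2) * (r / (1 - r)) := by
    have e1 : T1 + (1 / (1 + A) + r / (1 - r)) * T2
        = ((1 - r) * (T1 + 1 / (1 + A) * T2) + r * T2) / (1 - r) := by
      field_simp
      ring
    rw [e1, ← mul_div_assoc]
    gcongr
  have g1 : r / (1 - r) ≤ 1 / (2 - A) := by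
    rw [div_le_div_iff₀ h1r (by linarith)]; nlinarith
  have g2 : r / (1 - r ^ 2) ≤ (3 - A) / ((2 - A) * (4 - A)) := by
    rw [div_le_div_iff₀ (by linarith) (mul_pos (by linarith) (by linarith))]
    nlinarith [mul_nonneg (sub_nonneg.2 hr2) (show 0 ≤ 3 - A + r by linarith)]
  have g3 : r ^ 2 / (1 - r ^ 2) ^ 2 ≤ ((3 - A) / ((2 - A) * (4 - A))) ^ 2 := by
    rw [← div_pow]
    exact pow_le_pow_left₀ (div_nonneg hr0 (by linarith)) g2 2
  have g4 : 1 / (2 - A) + 9 / 8 * ((1 - A ^ 2) * ((3 - A) / ((2 - A) * (4 - A))) ^ 2) ≤ 1 := by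
    have p1 : 0 < 2 - A := by linarith
    have p2 : 0 < 4 - A := by linarith
    obtain ⟨t, rfl⟩ : ∃ t, A = 1 - t := ⟨1 - A, by ring⟩
    have ht : 0 ≤ t := by linarith
    have e : 1 - (1 / (2 - (1 - t)) + 9 / 8 * ((1 - (1 - t) ^ 2) * ((3 - (1 - t)) / ((2 - (1 - t)) * (4 - (1 - t)))) ^ 2))
        = t * (84 * t + 74 * t ^ 2 + 17 * t ^ 3) / (8 * ((2 - (1 - t)) * (4 - (1 - t))) ^ 2) := by
      field_simp
      ring
    have : 0 ≤ t * (84 * t + 74 * t ^ 2 + 17 * t ^ 3) / (8 * ((2 - (1 - t)) * (4 - (1 - t))) ^ 2) := by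
      positivity
    linarith
  have k1 := mul_le_mul_of_nonneg_left g1 hA2
  have k3 := mul_le_mul_of_nonneg_left g3 (sq_nonneg (1 - A ^ 2))
  have k4 := mul_le_mul_of_nonneg_left g4 hA2
  linarith
end

section
/- Let a be a real number with 4√2 - 5 < a < 1 and let φ_a(z) = (a - z)/(1 - a z), whose power series on 𝔻 is φ_a(z) = a - (1-a²) ∑_{n=1}^∞ a^{n-1} z^n. Then at z = r = 1/3 the refined quantity exceeds 1: a + (1-a²)·r/(1-r) + ((1-a²)·r/(1-ar))² = 1 + (1-a)²(a² + 10a - 7)/(2(3-a)²) > 1; hence the inequality ∑|a_n|r^n + (1/(1+|a_0|)+r/(1-r))∑|a_n|²r^{2n} + |f(z)-a_0|² ≤ 1 for all |z| = r ≤ 1/3 fails for f = φ_a. -/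
/-- Theorem 5 (necessity): for `4√2 - 5 < a < 1` and the Möbius map
`φ_a(z) = (a - z)/(1 - a z)` with coefficients `c 0 = a`,
`c (n+1) = -(1-a²)aⁿ`, at `r = 1/3` the refined quantity equals
`1 + (1-a)²(a² + 10a - 7)/(2(3-a)²) > 1`; hence there is a point `z` with
`|z| ≤ 1/3` at which the refined Bohr inequality with the term `|f(z)-a₀|²`
fails for `f = φ_a`. -/
theorem stmt17 (a : ℝ) (ha : 4 * Real.sqrt 2 - 5 < a) (ha1 : a < 1)
    (f : ℂ → ℂ) (hfdef : ∀ z : ℂ, f z = ((a : ℂ) - z) / (1 - (a : ℂ) * z))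
    (c : ℕ → ℂ) (hc0 : c 0 = (a : ℂ))
    (hc : ∀ n : ℕ, c (n + 1) = -(((1 - a ^ 2) * a ^ n : ℝ) : ℂ)) :
    a + (1 - a ^ 2) * (1 / 3) / (1 - 1 / 3)
        + ((1 - a ^ 2) * (1 / 3) / (1 - a * (1 / 3))) ^ 2
      = 1 + (1 - a) ^ 2 * (a ^ 2 + 10 * a - 7) / (2 * (3 - a) ^ 2) ∧
    1 < 1 + (1 - a) ^ 2 * (a ^ 2 + 10 * a - 7) / (2 * (3 - a) ^ 2) ∧
    ∃ z : ℂ, ‖z‖ ≤ 1 / 3 ∧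
      1 < (∑' n : ℕ, ‖c n‖ * ‖z‖ ^ n)
        + (1 / (1 + ‖c 0‖) + ‖z‖ / (1 - ‖z‖))
          * (∑' n : ℕ, ‖c (n + 1)‖ ^ 2 * ‖z‖ ^ (2 * (n + 1)))
        + ‖f z - c 0‖ ^ 2 := by
  have hs : Real.sqrt 2 ^ 2 = 2 := Real.sq_sqrt (by norm_num)
  have hs0 : 0 ≤ Real.sqrt 2 := Real.sqrt_nonneg 2
  have hs1 : 5 / 4 < Real.sqrt 2 := by
    apply Real.lt_sqrt_of_sq_lt
    norm_num
  have ha0 : 0 < a := by linarith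
  have h3 : (3 - a) ≠ 0 := by linarith
  have hp3 : 0 < 3 - a := by linarith
  have hq : 0 < a ^ 2 + 10 * a - 7 := by nlinarith
  have h1 : a + (1 - a ^ 2) * (1 / 3) / (1 - 1 / 3)
        + ((1 - a ^ 2) * (1 / 3) / (1 - a * (1 / 3))) ^ 2
      = 1 + (1 - a) ^ 2 * (a ^ 2 + 10 * a - 7) / (2 * (3 - a) ^ 2) := by
    have : (1 - a ^ 2) * (1 / 3) / (1 - a * (1 / 3)) = (1 - a ^ 2) / (3 - a) := by
      rw [div_eq_div_iff (by linarith) h3]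
      ring
    rw [this]
    field_simp
    ring
  have h2 : 1 < 1 + (1 - a) ^ 2 * (a ^ 2 + 10 * a - 7) / (2 * (3 - a) ^ 2) := by
    have : 0 < 1 - a := by linarith
    have : 0 < (1 - a) ^ 2 * (a ^ 2 + 10 * a - 7) / (2 * (3 - a) ^ 2) := by positivity
    linarith
  refine ⟨h1, h2, ((1 / 3 : ℝ) : ℂ), ?_, ?_⟩
  · rw [Complex.norm_real]
    norm_num
  have hz : ‖((1 / 3 : ℝ) : ℂ)‖ = 1 / 3 := by
    rw [Complex.norm_real]
    norm_num
  have hb : 0 < 1 - a ^ 2 := by nlinarith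
  have hn0 : ‖c 0‖ = a := by
    rw [hc0, Complex.norm_real, Real.norm_of_nonneg ha0.le]
  have hn : ∀ n, ‖c (n + 1)‖ = (1 - a ^ 2) * a ^ n := by
    intro n
    rw [hc, norm_neg, Complex.norm_real, Real.norm_of_nonneg (by positivity)]
  have hS1 : HasSum (fun n : ℕ => ‖c (n + 1)‖ * (1 / 3 : ℝ) ^ (n + 1))
      ((1 - a ^ 2) * (1 / 3) * (1 - a / 3)⁻¹) := by
    have := (hasSum_geometric_of_lt_one (r := a / 3) (by linarith)
      (by linarith)).mul_left ((1 - a ^ 2) * (1 / 3))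
    refine this.congr_fun ?_
    intro n
    rw [hn, show a / 3 = a * (1 / 3 : ℝ) by ring, mul_pow]
    ring
  have hS1t : (∑' n : ℕ, ‖c n‖ * (1 / 3 : ℝ) ^ n)
      = a + (1 - a ^ 2) * (1 / 3) * (1 - a / 3)⁻¹ := by
    have hsm : Summable (fun n : ℕ => ‖c n‖ * (1 / 3 : ℝ) ^ n) :=
      (summable_nat_add_iff (f := fun n : ℕ => ‖c n‖ * (1 / 3 : ℝ) ^ n) 1).1 hS1.summable
    rw [hsm.tsum_eq_zero_add, hS1.tsum_eq, hn0, pow_zero, mul_one]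
  have hS2 : (∑' n : ℕ, ‖c (n + 1)‖ ^ 2 * (1 / 3 : ℝ) ^ (2 * (n + 1)))
      = (1 - a ^ 2) ^ 2 * (1 / 9) * (1 - a ^ 2 / 9)⁻¹ := by
    have := (hasSum_geometric_of_lt_one (r := a ^ 2 / 9) (by positivity)
      (by linarith)).mul_left ((1 - a ^ 2) ^ 2 * (1 / 9))
    rw [← this.tsum_eq]
    congr 1
    funext n
    have e : ((1 / 3 : ℝ)) ^ (2 * (n + 1)) = (1 / 9) ^ n * (1 / 9) := by
      rw [pow_mul, pow_succ]
      norm_num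
    rw [hn, e, show a ^ 2 / 9 = a ^ 2 * (1 / 9 : ℝ) by ring, mul_pow (a ^ 2)]
    ring
  have hF : ‖f ((1 / 3 : ℝ) : ℂ) - c 0‖ ^ 2
      = ((1 - a ^ 2) * (1 / 3) / (1 - a * (1 / 3))) ^ 2 := by
    have : f ((1 / 3 : ℝ) : ℂ) - c 0
        = (((a - 1 / 3) / (1 - a * (1 / 3)) - a : ℝ) : ℂ) := by
      rw [hfdef, hc0]
      push_cast
      ring
    rw [this, Complex.norm_real, Real.norm_eq_abs, sq_abs]
    have h4 : 1 - a * (1 / 3) ≠ 0 := by linarith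
    have : (a - 1 / 3) / (1 - a * (1 / 3)) - a
        = -((1 - a ^ 2) * (1 / 3) / (1 - a * (1 / 3))) := by
      rw [div_sub' h4, ← neg_div]
      congr 1
      ring
    rw [this, neg_sq]
  rw [hF, hz, hS1t, hS2, hn0]
  have hkey : a + (1 - a ^ 2) * (1 / 3) * (1 - a / 3)⁻¹
      + (1 / (1 + a) + 1 / 3 / (1 - 1 / 3))
        * ((1 - a ^ 2) ^ 2 * (1 / 9) * (1 - a ^ 2 / 9)⁻¹)
      = a + (1 - a ^ 2) * (1 / 3) / (1 - 1 / 3) := by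
    have e1 : (1 - a / 3)⁻¹ = 3 / (3 - a) := by
      rw [inv_eq_one_div, div_eq_div_iff (by linarith) h3]
      ring
    have h5 : 3 + a ≠ 0 := by linarith
    have h6 : 1 + a ≠ 0 := by linarith
    have e2 : (1 - a ^ 2 / 9)⁻¹ = 9 / ((3 - a) * (3 + a)) := by
      rw [inv_eq_one_div, div_eq_div_iff (by nlinarith) (mul_ne_zero h3 h5)]
      ring
    rw [e1, e2]
    norm_num
    field_simp
    ring
  rw [hkey, h1]
  exact h2
end

section
/- For every z ∈ 𝔻 with |z| = r ≤ 1/5: ∑_{n=0}^∞ |a_n| r^n + (1/(1+|a_0|) + r/(1-r)) · ∑_{n=1}^∞ |a_n|² r^{2n} + |f(z) - a_0| ≤ 1. Moreover, for every z ∈ 𝔻 with |z| = r ≤ 1/3: |a_0|² + ∑_{n=1}^∞ |a_n| r^n + (1/(1+|a_0|) + r/(1-r)) · ∑_{n=1}^∞ |a_n|² r^{2n} + |f(z) - a_0| ≤ 1. -/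
open Polynomial in
lemma bessel18 (P p : ℂ[X]) (hP : ∀ z : ℂ, ‖z‖ = 1 → ‖P.eval z‖ ≤ 1) (s t : Finset ℕ)
    (ht : p.support ⊆ t) :
    ∑ i ∈ s, ‖(P * p).coeff i‖ ^ 2 ≤ ∑ i ∈ t, ‖p.coeff i‖ ^ 2 := by
  have h1 : ∑ i ∈ s, ‖(P * p).coeff i‖ ^ 2 ≤ ∑ i ∈ (P * p).support, ‖(P * p).coeff i‖ ^ 2 := by
    rw [Finset.sum_subset (s₁ := (P*p).support) (s₂ := s ∪ (P*p).support)]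
    · exact Finset.sum_le_sum_of_subset_of_nonneg Finset.subset_union_left
        (fun _ _ _ => by positivity)
    · exact Finset.subset_union_right
    · intro x _ hx
      simp [Polynomial.notMem_support_iff.mp hx]
  have h2 : ∑ i ∈ p.support, ‖p.coeff i‖ ^ 2 ≤ ∑ i ∈ t, ‖p.coeff i‖ ^ 2 :=
    Finset.sum_le_sum_of_subset_of_nonneg ht (fun _ _ _ => by positivity)
  refine h1.trans (le_trans ?_ h2)
  rw [sum_sq_norm_coeff_eq_circleAverage, sum_sq_norm_coeff_eq_circleAverage]
  apply Real.circleAverage_mono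
  · apply ContinuousOn.circleIntegrable'
    fun_prop
  · apply ContinuousOn.circleIntegrable'
    fun_prop
  · intro z hz
    have hz1 : ‖z‖ = 1 := by simpa using hz
    have := hP z hz1
    simp only [eval_mul, norm_mul, mul_pow]
    have h3 : ‖P.eval z‖ ^ 2 ≤ 1 := pow_le_one₀ (norm_nonneg _) this
    nlinarith [sq_nonneg ‖p.eval z‖]

lemma phase18 (w : ℂ) : ∃ e : ℂ, ‖e‖ = 1 ∧ w = e * (‖w‖ : ℂ) := by
  by_cases h : w = 0
  · exact ⟨1, by simp, by simp [h]⟩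
  · have : (‖w‖ : ℂ) ≠ 0 := by simpa using h
    refine ⟨w / ‖w‖, ?_, ?_⟩
    · have : ‖w‖ ≠ 0 := by simpa using h
      simp [this]
    · field_simp

/-- the test polynomial `1 + X^m * ∑ c_k X^k` -/
noncomputable def testPoly18 (m n : ℕ) (c : ℕ → ℂ) : Polynomial ℂ :=
  1 + Polynomial.X ^ m * ∑ k ∈ Finset.range (n + 1), Polynomial.C (c k) * Polynomial.X ^ k

open Polynomial in
lemma testPoly18_coeff (m n : ℕ) (c : ℕ → ℂ) (i : ℕ) :
    (testPoly18 m n c).coeff i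
      = (if i = 0 then 1 else 0) + if m ≤ i ∧ i - m ≤ n then c (i - m) else 0 := by
  unfold testPoly18
  rw [coeff_add, coeff_one, coeff_X_pow_mul', finsetSum_coeff]
  simp only [coeff_C_mul, coeff_X_pow]
  by_cases h : m ≤ i <;> simp [h, Nat.lt_succ_iff]

lemma testPoly18_sum (m n : ℕ) (hm : 0 < m) (c : ℕ → ℂ) :
    ∑ i ∈ Finset.range (m + (n + 1)), ‖(testPoly18 m n c).coeff i‖ ^ 2
      = 1 + ∑ k ∈ Finset.range (n + 1), ‖c k‖ ^ 2 := by
  rw [Finset.sum_range_add]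
  congr 1
  · rw [Finset.sum_eq_single 0]
    · simp [testPoly18_coeff, hm.ne']
    · intro b hb hb0
      have : ¬ m ≤ b := by simpa using hb
      simp [testPoly18_coeff, this, hb0]
    · simp [hm.ne']
  · apply Finset.sum_congr rfl
    intro k hk
    have : k ≤ n := by simpa [Nat.lt_succ_iff] using hk
    simp [testPoly18_coeff, hm.ne', this]

open Polynomial in
lemma testPoly18_supp (m n : ℕ) (c : ℕ → ℂ) :
    (testPoly18 m n c).support ⊆ Finset.range (m + (n + 1)) := by
  intro i hi
  rw [Polynomial.mem_support_iff, testPoly18_coeff] at hi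
  by_contra h
  simp only [Finset.mem_range] at h
  apply hi
  rw [if_neg (by omega), if_neg (by omega), add_zero]

open Polynomial in
lemma mulTest18_lt (P : ℂ[X]) (m n : ℕ) (c : ℕ → ℂ) (i : ℕ) (hi : i < m) :
    (P * testPoly18 m n c).coeff i = P.coeff i := by
  unfold testPoly18
  rw [mul_add, mul_one, mul_left_comm, coeff_add, coeff_X_pow_mul', if_neg (by omega), add_zero]

open Polynomial in
lemma mulTest18_ge (P : ℂ[X]) (m n : ℕ) (c : ℕ → ℂ) (i : ℕ) (hi : i ≤ n) :
    (P * testPoly18 m n c).coeff (m + i)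
      = P.coeff (m + i) + ∑ k ∈ Finset.range (i + 1), c k * P.coeff (i - k) := by
  unfold testPoly18
  rw [mul_add, mul_one, mul_left_comm, coeff_add, coeff_X_pow_mul', if_pos (by omega),
    Nat.add_sub_cancel_left, Finset.mul_sum, finsetSum_coeff]
  congr 1
  rw [← Finset.sum_subset (s₁ := Finset.range (i+1)) (s₂ := Finset.range (n+1))]
  · apply Finset.sum_congr rfl
    intro k hk
    have : k ≤ i := by simpa [Nat.lt_succ_iff] using hk
    rw [mul_left_comm, coeff_C_mul, coeff_mul_X_pow', if_pos this]
  · intro x; simp; omega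
  · intro k _ hk
    have : ¬ k ≤ i := by simpa [Nat.lt_succ_iff] using hk
    rw [mul_left_comm, coeff_C_mul, coeff_mul_X_pow', if_neg this, mul_zero]

open Polynomial in
lemma odd18 (P : ℂ[X]) (hP : ∀ z : ℂ, ‖z‖ = 1 → ‖P.eval z‖ ≤ 1) (n : ℕ) :
    ‖P.coeff (2 * n + 1)‖ + ∑ k ∈ Finset.range (n + 1), ‖P.coeff k‖ ^ 2 ≤ 1 := by
  obtain ⟨e, he, hw⟩ := phase18 (P.coeff (2 * n + 1))
  set c : ℕ → ℂ := fun k => e * (starRingEnd ℂ) (P.coeff (n - k)) with hc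
  set S := ∑ k ∈ Finset.range (n + 1), ‖P.coeff k‖ ^ 2 with hS
  have hS0 : 0 ≤ S := Finset.sum_nonneg (fun _ _ => by positivity)
  have hrefl : ∑ k ∈ Finset.range (n + 1), ‖P.coeff (n - k)‖ ^ 2 = S := by
    rw [hS, ← Finset.sum_range_reflect (fun k => ‖P.coeff k‖ ^ 2)]
    simp
  have hcS : ∑ k ∈ Finset.range (n + 1), ‖c k‖ ^ 2 = S := by
    rw [← hrefl]; simp [hc, he]
  have hlow : ∑ i ∈ Finset.range (n + 1), ‖(P * testPoly18 (n + 1) n c).coeff i‖ ^ 2 = S :=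
    Finset.sum_congr rfl (fun i hi => by rw [mulTest18_lt _ _ _ _ _ (Finset.mem_range.mp hi)])
  have hB := bessel18 P (testPoly18 (n+1) n c) hP (insert (n + 1 + n) (Finset.range (n + 1))) _
    (testPoly18_supp _ _ _)
  rw [testPoly18_sum _ _ (Nat.succ_pos n), hcS, Finset.sum_insert (by simp),
    mulTest18_ge _ _ _ _ _ le_rfl,
    hlow] at hB
  have hconv : ∑ k ∈ Finset.range (n + 1), c k * P.coeff (n - k) = e * (S : ℂ) := by
    rw [← hrefl]
    push_cast
    rw [Finset.mul_sum]
    refine Finset.sum_congr rfl fun k _ => ?_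
    rw [hc]; simp only
    rw [mul_assoc, Complex.conj_mul']
  rw [hconv, show n + 1 + n = 2 * n + 1 by ring] at hB
  have h1 : ‖P.coeff (2 * n + 1) + e * (S : ℂ)‖ = ‖P.coeff (2 * n + 1)‖ + S := by
    conv_lhs => rw [hw, ← mul_add, norm_mul, he, one_mul, ← Complex.ofReal_add, Complex.norm_real]
    rw [Real.norm_of_nonneg (by positivity)]
  rw [h1] at hB
  have := norm_nonneg (P.coeff (2 * n + 1))
  nlinarith

open Polynomial in
lemma even18 (P : ℂ[X]) (hP : ∀ z : ℂ, ‖z‖ = 1 → ‖P.eval z‖ ≤ 1) (n : ℕ) (hn : 0 < n) :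
    ‖P.coeff (2 * n)‖ + (∑ k ∈ Finset.range n, ‖P.coeff k‖ ^ 2)
      + ‖P.coeff n‖ ^ 2 / (1 + ‖P.coeff 0‖) ≤ 1 := by
  obtain ⟨e, he, hw⟩ := phase18 (P.coeff (2 * n))
  set A := ‖P.coeff 0‖ with hA
  have hA0 : 0 ≤ A := norm_nonneg _
  set l : ℝ := 1 / (1 + A) with hl
  have hl0 : 0 < l := by positivity
  have hlA : l * A = 1 - l := by rw [hl]; field_simp; ring
  set c : ℕ → ℂ := fun k => (if k = 0 then (l : ℂ) else 1) *
    (e * (starRingEnd ℂ) (P.coeff (n - k))) with hc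
  set S := ∑ k ∈ Finset.range n, ‖P.coeff k‖ ^ 2 with hS
  set b := ‖P.coeff n‖ ^ 2 with hb
  have hb0 : 0 ≤ b := by positivity
  have hS0 : 0 ≤ S := Finset.sum_nonneg (fun _ _ => by positivity)
  have hrefl : ∑ k ∈ Finset.range n, ‖P.coeff (n - (k + 1))‖ ^ 2 = S := by
    rw [hS, ← Finset.sum_range_reflect (fun k => ‖P.coeff k‖ ^ 2)]
    refine Finset.sum_congr rfl fun k _ => ?_
    congr 3; omega
  have hcS : ∑ k ∈ Finset.range (n + 1), ‖c k‖ ^ 2 = S + l ^ 2 * b := by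
    rw [Finset.sum_range_succ', ← hrefl]
    simp [hc, he, hb, mul_pow]
  have hlow : ∑ i ∈ Finset.range n, ‖(P * testPoly18 n n c).coeff i‖ ^ 2 = S :=
    Finset.sum_congr rfl (fun i hi => by rw [mulTest18_lt _ _ _ _ _ (Finset.mem_range.mp hi)])
  have hB := bessel18 P (testPoly18 n n c) hP
    (insert (n + n) (insert (n + 0) (Finset.range n))) _
    (testPoly18_supp _ _ _)
  rw [testPoly18_sum _ _ hn, hcS, Finset.sum_insert (by simp; omega),
    Finset.sum_insert (by simp), mulTest18_ge _ _ _ _ _ le_rfl,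
    mulTest18_ge _ _ _ _ _ (Nat.zero_le n),
    hlow] at hB
  have hconv : ∑ k ∈ Finset.range (n + 1), c k * P.coeff (n - k) = e * ((S + l * b : ℝ) : ℂ) := by
    rw [← hrefl, Finset.sum_range_succ', Complex.ofReal_add, mul_add]
    congr 1
    · push_cast
      rw [Finset.mul_sum]
      refine Finset.sum_congr rfl fun k _ => ?_
      simp only [hc, Nat.succ_ne_zero, if_false, one_mul]
      rw [mul_assoc, Complex.conj_mul']
    · simp only [hc, if_true, hb]
      rw [mul_assoc, mul_assoc, Nat.sub_zero, Complex.conj_mul']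
      push_cast; ring
  rw [hconv, show n + n = 2 * n by ring] at hB
  have h1 : ‖P.coeff (2 * n) + e * ((S + l * b : ℝ) : ℂ)‖ = ‖P.coeff (2 * n)‖ + (S + l * b) := by
    conv_lhs => rw [hw, ← mul_add, norm_mul, he, one_mul, ← Complex.ofReal_add, Complex.norm_real]
    rw [Real.norm_of_nonneg (by positivity)]
  have h2 : l ^ 2 * b ≤ ‖P.coeff (n + 0) + ∑ k ∈ Finset.range (0 + 1), c k * P.coeff (0 - k)‖ ^ 2 := by
    have h3 : ‖c 0 * P.coeff 0‖ = (1 - l) * ‖P.coeff n‖ := by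
      rw [← hlA]
      simp [hc, he, abs_of_pos hl0, hA]; ring
    have h4 : l * ‖P.coeff n‖ ≤ ‖P.coeff n + c 0 * P.coeff 0‖ := by
      have := norm_sub_le (P.coeff n + c 0 * P.coeff 0) (c 0 * P.coeff 0)
      rw [add_sub_cancel_right, h3] at this
      linarith
    have h5 : (l * ‖P.coeff n‖) ^ 2 ≤ ‖P.coeff n + c 0 * P.coeff 0‖ ^ 2 :=
      pow_le_pow_left₀ (by positivity) h4 2
    simpa [hb, mul_pow] using h5
  rw [h1] at hB
  have h6 : b / (1 + A) = l * b := by rw [hl]; ring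
  rw [h6]
  have := norm_nonneg (P.coeff (2 * n))
  have : 0 ≤ l * b := by positivity
  nlinarith

open Filter Topology Polynomial in
lemma approx18 (f : ℂ → ℂ) (a : ℕ → ℂ)
    (hb : ∀ z ∈ Metric.ball (0 : ℂ) 1, ‖f z‖ ≤ 1)
    (hs : ∀ z ∈ Metric.ball (0 : ℂ) 1, HasSum (fun n => a n * z ^ n) (f z)) :
    ∃ P : ℕ → ℂ[X], (∀ m, ∀ z : ℂ, ‖z‖ = 1 → ‖(P m).eval z‖ ≤ 1) ∧
      ∀ k, Tendsto (fun m => (P m).coeff k) atTop (𝓝 (a k)) := by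
  set d : ℕ → ℝ := fun m => 1 / ((m : ℝ) + 1) with hd
  have hd0 : ∀ m, 0 < d m := fun m => by simp only [hd]; positivity
  have hd1 : ∀ m, d m ≤ 1 := fun m => by
    simp only [hd]; rw [div_le_one (by positivity)]; linarith [Nat.cast_nonneg (α := ℝ) m]
  have hdl : Tendsto d atTop (𝓝 0) := tendsto_one_div_add_atTop_nhds_zero_nat
  have key : ∀ m, ∃ K, m ≤ K ∧ ∀ z : ℂ, ‖z‖ = 1 →
      ‖∑ k ∈ Finset.range K, a k * (((1 - d m : ℝ) : ℂ) * z) ^ k‖ ≤ 1 + d m := by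
    intro m
    have hr0 : 0 ≤ 1 - d m := by linarith [hd1 m]
    have hball : ∀ z : ℂ, ‖z‖ = 1 → ((1 - d m : ℝ) : ℂ) * z ∈ Metric.ball (0 : ℂ) 1 := by
      intro z hz
      rw [mem_ball_zero_iff, norm_mul, hz, mul_one, Complex.norm_real, Real.norm_of_nonneg hr0]
      linarith [hd0 m]
    have hsum := (hs _ (hball 1 (by simp))).summable.norm
    have hu := tendstoUniformlyOn_tsum_nat (f := fun k (z : ℂ) => a k * (((1 - d m : ℝ) : ℂ) * z) ^ k)
      hsum (s := {z : ℂ | ‖z‖ = 1}) (by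
        intro k z hz
        have hz' : ‖z‖ = 1 := hz
        simp [mul_pow, hz'])
    rw [Metric.tendstoUniformlyOn_iff] at hu
    obtain ⟨K, hK1, hK2⟩ := ((hu (d m) (hd0 m)).and (eventually_ge_atTop m)).exists
    refine ⟨K, hK2, fun z hz => ?_⟩
    have h1 := hK1 z hz
    rw [(hs _ (hball z hz)).tsum_eq, dist_eq_norm, norm_sub_rev] at h1
    have h2 := hb _ (hball z hz)
    have h3 := norm_le_norm_add_norm_sub' (∑ k ∈ Finset.range K, a k * (((1 - d m : ℝ) : ℂ) * z) ^ k)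
      (f (((1 - d m : ℝ) : ℂ) * z))
    linarith
  choose K hK hKb using key
  refine ⟨fun m => C (((1 + d m : ℝ) : ℂ)⁻¹) *
    ∑ k ∈ Finset.range (K m), C (a k * ((1 - d m : ℝ) : ℂ) ^ k) * X ^ k, ?_, ?_⟩
  · intro m z hz
    have h := hKb m z hz
    have hp : 0 < 1 + d m := by linarith [hd0 m]
    rw [eval_mul, eval_C, eval_finsetSum, norm_mul, norm_inv, Complex.norm_real,
      Real.norm_of_nonneg hp.le, inv_mul_le_iff₀ hp, mul_one]
    refine le_trans (le_of_eq (congrArg norm ?_)) h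
    refine Finset.sum_congr rfl fun k _ => ?_
    simp [mul_pow, mul_assoc]
  · intro k
    have h1 : Tendsto (fun m => (((1 + d m : ℝ) : ℂ)⁻¹) * (a k * ((1 - d m : ℝ) : ℂ) ^ k)) atTop
        (𝓝 ((((1 + 0 : ℝ) : ℂ)⁻¹) * (a k * ((1 - 0 : ℝ) : ℂ) ^ k))) := by
      have hA : Tendsto (fun m => ((1 + d m : ℝ) : ℂ)) atTop (𝓝 ((1 + 0 : ℝ) : ℂ)) :=
        (Complex.continuous_ofReal.tendsto _).comp (hdl.const_add 1)
      have hB : Tendsto (fun m => ((1 - d m : ℝ) : ℂ)) atTop (𝓝 ((1 - 0 : ℝ) : ℂ)) :=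
        (Complex.continuous_ofReal.tendsto _).comp (hdl.const_sub 1)
      exact (hA.inv₀ (by simp)).mul ((hB.pow k).const_mul _)
    simp only [add_zero, sub_zero, Complex.ofReal_one, inv_one, one_mul, one_pow, mul_one] at h1
    refine h1.congr' ?_
    filter_upwards [eventually_gt_atTop k] with m hm
    have : k < K m := lt_of_lt_of_le hm (hK m)
    rw [coeff_C_mul, finsetSum_coeff]
    simp only [coeff_C_mul, coeff_X_pow]
    simp [this]

/-- Numerical summation. -/
lemma sum18 (b : ℕ → ℝ) (hb0 : ∀ n, 0 ≤ b n)
    (ho : ∀ n, b (2 * n + 1) + ∑ k ∈ Finset.range (n + 1), b k ^ 2 ≤ 1)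
    (he : ∀ n, 0 < n → b (2 * n) + ∑ k ∈ Finset.range n, b k ^ 2 + b n ^ 2 / (1 + b 0) ≤ 1)
    (r : ℝ) (hr0 : 0 ≤ r) (hr1 : r < 1) :
    Summable (fun n => b (n + 1) * r ^ (n + 1)) ∧
    (∑' n, b (n + 1) * r ^ (n + 1)) + (1 / (1 + b 0) + r / (1 - r)) *
      (∑' n, b (n + 1) ^ 2 * r ^ (2 * (n + 1))) ≤ (1 - b 0 ^ 2) * (r / (1 - r)) := by
  have hA : (0 : ℝ) < 1 + b 0 := by linarith [hb0 0]
  have hsq : ∀ n, 0 ≤ ∑ k ∈ Finset.range n, b k ^ 2 :=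
    fun n => Finset.sum_nonneg fun _ _ => by positivity
  have hle1 : ∀ n, b (n + 1) ≤ 1 := by
    intro n
    obtain ⟨k, hk | hk⟩ := Nat.even_or_odd' (n + 1)
    · have := he k (by omega)
      have h2 := hsq k
      have : 0 ≤ b k ^ 2 / (1 + b 0) := by positivity
      rw [hk]; linarith
    · have := ho k
      have h2 := hsq (k + 1)
      rw [hk]; linarith
  have hgeo : Summable (fun n : ℕ => r ^ n) := summable_geometric_of_lt_one hr0 hr1
  have hgeo1 : Summable (fun n : ℕ => r ^ (n + 1)) := (summable_nat_add_iff 1).2 hgeo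
  have hr2 : r ^ 2 < 1 := by nlinarith
  have hgeo2 : Summable (fun n : ℕ => r ^ (2 * n)) := by
    simp only [pow_mul]; exact summable_geometric_of_lt_one (by positivity) hr2
  have hgeo3 : Summable (fun n : ℕ => r ^ (2 * (n + 1))) :=
    (summable_nat_add_iff (f := fun n : ℕ => r ^ (2 * n)) 1).2 hgeo2
  have hsum : Summable (fun n => b (n + 1) * r ^ (n + 1)) :=
    Summable.of_nonneg_of_le (fun n => mul_nonneg (hb0 _) (by positivity))
      (fun n => mul_le_of_le_one_left (by positivity) (hle1 n)) hgeo1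
  refine ⟨hsum, ?_⟩
  have hT : Summable (fun n => b (n + 1) ^ 2 * r ^ (2 * (n + 1))) :=
    Summable.of_nonneg_of_le (fun n => by positivity)
      (fun n => mul_le_of_le_one_left (by positivity) (pow_le_one₀ (hb0 _) (hle1 n))) hgeo3
  set S : ℕ → ℝ := fun n => ∑ k ∈ Finset.range n, b (k + 1) ^ 2 with hS
  have hS0 : ∀ n, 0 ≤ S n := fun n => Finset.sum_nonneg fun _ _ => by positivity
  have hSs : ∀ n, S (n + 1) = S n + b (n + 1) ^ 2 := fun n => Finset.sum_range_succ _ _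
  have hss : ∀ n, ∑ k ∈ Finset.range (n + 1), b k ^ 2 = S n + b 0 ^ 2 :=
    fun n => Finset.sum_range_succ' _ _
  have ho' : ∀ n, b (2 * n + 1) ≤ 1 - b 0 ^ 2 - S n := fun n => by
    have := ho n; rw [hss] at this; linarith
  have he' : ∀ n, b (2 * n + 1 + 1) ≤ 1 - b 0 ^ 2 - S n - 1 / (1 + b 0) * b (n + 1) ^ 2 := fun n => by
    have := he (n + 1) (by omega); rw [hss, div_eq_inv_mul] at this
    rw [one_div, show 2 * n + 1 + 1 = 2 * (n + 1) by ring]; linarith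
  have hS1 : ∀ n, S n ≤ 1 := fun n => by nlinarith [ho' n, hb0 (2 * n + 1), sq_nonneg (b 0)]
  have hV : Summable (fun n => S n * r ^ (2 * n)) :=
    Summable.of_nonneg_of_le (fun n => mul_nonneg (hS0 n) (by positivity))
      (fun n => mul_le_of_le_one_left (by positivity) (hS1 n)) hgeo2
  set T := ∑' n, b (n + 1) ^ 2 * r ^ (2 * (n + 1)) with hTd
  set V := ∑' n, S n * r ^ (2 * n) with hVd
  set G := ∑' n : ℕ, r ^ (2 * n) with hGd
  have hG : G = (1 - r ^ 2)⁻¹ := by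
    rw [hGd]; simp only [pow_mul]; exact tsum_geometric_of_lt_one (by positivity) hr2
  have hVT : V = r ^ 2 * V + T := by
    conv_lhs => rw [hVd, hV.tsum_eq_zero_add]
    rw [hVd, hTd, ← tsum_mul_left, ← (hV.mul_left _).tsum_add hT]
    simp only [hS, Finset.range_zero, Finset.sum_empty, zero_mul, zero_add]
    refine tsum_congr fun n => ?_
    rw [Finset.sum_range_succ]; ring
  have hE : HasSum (fun n => (1 - b 0 ^ 2) * (r * (1 + r)) * r ^ (2 * n) - (r * (1 + r)) * (S n * r ^ (2 * n))
      - 1 / (1 + b 0) * (b (n + 1) ^ 2 * r ^ (2 * (n + 1))))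
      ((1 - b 0 ^ 2) * (r * (1 + r)) * G - r * (1 + r) * V - 1 / (1 + b 0) * T) :=
    ((hgeo2.hasSum.mul_left _).sub (hV.hasSum.mul_left _)).sub (hT.hasSum.mul_left _)
  have hs1 : Summable (fun n => b (2 * n + 1) * r ^ (2 * n + 1)) :=
    hsum.comp_injective (i := fun n => 2 * n) (fun x y h => by simpa using h)
  have hs2 : Summable (fun n => b (2 * n + 1 + 1) * r ^ (2 * n + 1 + 1)) :=
    hsum.comp_injective (i := fun n => 2 * n + 1) (fun x y h => by simpa using h)
  have hsplit := tsum_even_add_odd (f := fun n => b (n + 1) * r ^ (n + 1)) hs1 hs2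
  rw [← hs1.tsum_add hs2] at hsplit
  have hmain : (∑' n, b (n + 1) * r ^ (n + 1)) ≤
      (1 - b 0 ^ 2) * (r * (1 + r)) * G - r * (1 + r) * V - 1 / (1 + b 0) * T := by
    rw [← hsplit]
    refine hasSum_le (fun n => ?_) (hs1.add hs2).hasSum hE
    have h1 := mul_le_mul_of_nonneg_right (ho' n) (pow_nonneg hr0 (2 * n + 1))
    have h2 := mul_le_mul_of_nonneg_right (he' n) (pow_nonneg hr0 (2 * n + 1 + 1))
    refine (add_le_add h1 h2).trans (le_of_eq ?_)
    ring
  have h1r : (0:ℝ) < 1 - r := by linarith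
  have h1r' : (0:ℝ) < 1 + r := by linarith
  have hVe : r * (1 + r) * V = r / (1 - r) * T := by
    have : T = (1 - r) * (1 + r) * V := by linarith
    rw [this]; field_simp
  have hGe : (r * (1 + r)) * G = r / (1 - r) := by
    rw [hG, show 1 - r ^ 2 = (1 - r) * (1 + r) by ring]; field_simp
  rw [hVe, mul_assoc, hGe] at hmain
  linarith

open Filter Topology in
lemma carl18 (f : ℂ → ℂ) (a : ℕ → ℂ)
    (hb : ∀ z ∈ Metric.ball (0 : ℂ) 1, ‖f z‖ ≤ 1)
    (hs : ∀ z ∈ Metric.ball (0 : ℂ) 1, HasSum (fun n => a n * z ^ n) (f z)) :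
    (∀ n, ‖a (2 * n + 1)‖ + ∑ k ∈ Finset.range (n + 1), ‖a k‖ ^ 2 ≤ 1) ∧
    (∀ n, 0 < n → ‖a (2 * n)‖ + ∑ k ∈ Finset.range n, ‖a k‖ ^ 2
      + ‖a n‖ ^ 2 / (1 + ‖a 0‖) ≤ 1) := by
  obtain ⟨P, hP, hl⟩ := approx18 f a hb hs
  refine ⟨fun n => ?_, fun n hn => ?_⟩
  · exact le_of_tendsto' ((hl _).norm.add (tendsto_finsetSum _ fun k _ => (hl k).norm.pow 2))
      (fun m => odd18 (P m) (hP m) n)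
  · refine le_of_tendsto' (((hl _).norm.add (tendsto_finsetSum _ fun k _ => (hl k).norm.pow 2)).add
      (((hl n).norm.pow 2).div ((hl 0).norm.const_add 1) ?_))
      (fun m => even18 (P m) (hP m) n hn)
    positivity

/-- Theorem 6: for a bounded analytic self-map `f` of the unit disk with
coefficients `a n`: for every `z` with `|z| = r ≤ 1/5`,
`∑_{n=0}^∞ |aₙ| rⁿ + (1/(1+|a₀|) + r/(1-r)) ∑_{n=1}^∞ |aₙ|² r^{2n}
  + |f(z) - a₀| ≤ 1`;
and for every `z` with `|z| = r ≤ 1/3`,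
`|a₀|² + ∑_{n=1}^∞ |aₙ| rⁿ + (1/(1+|a₀|) + r/(1-r)) ∑_{n=1}^∞ |aₙ|² r^{2n}
  + |f(z) - a₀| ≤ 1`. -/
theorem stmt18 (f : ℂ → ℂ) (a : ℕ → ℂ)
    (hf : DifferentiableOn ℂ f (Metric.ball 0 1))
    (hb : ∀ z ∈ Metric.ball (0 : ℂ) 1, ‖f z‖ ≤ 1)
    (hs : ∀ z ∈ Metric.ball (0 : ℂ) 1, HasSum (fun n => a n * z ^ n) (f z)) :
    (∀ z : ℂ, z ∈ Metric.ball (0 : ℂ) 1 → ‖z‖ ≤ 1 / 5 →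
      (∑' n : ℕ, ‖a n‖ * ‖z‖ ^ n)
        + (1 / (1 + ‖a 0‖) + ‖z‖ / (1 - ‖z‖))
          * (∑' n : ℕ, ‖a (n + 1)‖ ^ 2 * ‖z‖ ^ (2 * (n + 1)))
        + ‖f z - a 0‖ ≤ 1) ∧
    (∀ z : ℂ, z ∈ Metric.ball (0 : ℂ) 1 → ‖z‖ ≤ 1 / 3 →
      ‖a 0‖ ^ 2 + (∑' n : ℕ, ‖a (n + 1)‖ * ‖z‖ ^ (n + 1))
        + (1 / (1 + ‖a 0‖) + ‖z‖ / (1 - ‖z‖))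
          * (∑' n : ℕ, ‖a (n + 1)‖ ^ 2 * ‖z‖ ^ (2 * (n + 1)))
        + ‖f z - a 0‖ ≤ 1) := by
  obtain ⟨ho, he⟩ := carl18 f a hb hs
  have ha1 : ‖a 0‖ ^ 2 ≤ 1 := by
    have := ho 0
    simp at this
    linarith [norm_nonneg (a 1)]
  have ha0 := norm_nonneg (a 0)
  have ha1' : ‖a 0‖ ≤ 1 := by nlinarith
  have main : ∀ z : ℂ, z ∈ Metric.ball (0 : ℂ) 1 →
      Summable (fun n => ‖a n‖ * ‖z‖ ^ n) ∧
      (∑' n : ℕ, ‖a (n + 1)‖ * ‖z‖ ^ (n + 1))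
        + (1 / (1 + ‖a 0‖) + ‖z‖ / (1 - ‖z‖))
          * (∑' n : ℕ, ‖a (n + 1)‖ ^ 2 * ‖z‖ ^ (2 * (n + 1)))
        + ‖f z - a 0‖ ≤ 2 * ((1 - ‖a 0‖ ^ 2) * (‖z‖ / (1 - ‖z‖))) := by
    intro z hz
    have hz1 : ‖z‖ < 1 := by simpa using hz
    obtain ⟨h1, h2⟩ := sum18 (fun n => ‖a n‖) (fun n => norm_nonneg _) ho he ‖z‖ (norm_nonneg _) hz1
    have h3 : Summable (fun n => ‖a n‖ * ‖z‖ ^ n) :=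
      (summable_nat_add_iff (f := fun n => ‖a n‖ * ‖z‖ ^ n) 1).1 h1
    refine ⟨h3, ?_⟩
    have h4 : f z - a 0 = ∑' n : ℕ, a (n + 1) * z ^ (n + 1) := by
      rw [← (hs z hz).tsum_eq, (hs z hz).summable.tsum_eq_zero_add]; simp
    have h5 : ‖f z - a 0‖ ≤ ∑' n : ℕ, ‖a (n + 1)‖ * ‖z‖ ^ (n + 1) := by
      rw [h4]
      exact tsum_of_norm_bounded h1.hasSum (fun n => by simp)
    have h6 : 0 ≤ (1 / (1 + ‖a 0‖) + ‖z‖ / (1 - ‖z‖))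
          * (∑' n : ℕ, ‖a (n + 1)‖ ^ 2 * ‖z‖ ^ (2 * (n + 1))) := by
      have : 0 < 1 - ‖z‖ := by linarith
      exact mul_nonneg (by positivity) (tsum_nonneg fun n => by positivity)
    linarith
  have hq : ∀ z : ℂ, ∀ q : ℝ, z ∈ Metric.ball (0 : ℂ) 1 → ‖z‖ ≤ q * (1 - ‖z‖) →
      (1 - ‖a 0‖ ^ 2) * (‖z‖ / (1 - ‖z‖)) ≤ (1 - ‖a 0‖ ^ 2) * q := by
    intro z q hz h
    have hz1 : ‖z‖ < 1 := by simpa using hz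
    exact mul_le_mul_of_nonneg_left ((div_le_iff₀ (by linarith)).2 h) (by linarith)
  refine ⟨fun z hz hr => ?_, fun z hz hr => ?_⟩
  · obtain ⟨h1, h2⟩ := main z hz
    have h3 := hq z (1 / 4) hz (by linarith)
    rw [h1.tsum_eq_zero_add, pow_zero, mul_one]
    nlinarith [sq_nonneg (1 - ‖a 0‖)]
  · obtain ⟨h1, h2⟩ := main z hz
    have h3 := hq z (1 / 2) hz (by linarith)
    linarith
end

section
/- For every z ∈ 𝔻 with |z| = r ≤ (√17 - 3)/4: |f(z)| + |f'(z)|·r + ∑_{n=2}^∞ |a_n| r^n + (1/(1+|a_0|) + r/(1-r)) · ∑_{n=1}^∞ |a_n|² r^{2n} ≤ 1. Moreover, if r ∈ [0,1) satisfies 1 - 2r - r² - r³ - r⁴ ≥ 0, then for every z with |z| = r: |f(z)|² + |f'(z)|·r + ∑_{n=2}^∞ |a_n| r^n + (1/(1+|a_0|) + r/(1-r)) · ∑_{n=1}^∞ |a_n|² r^{2n} ≤ 1. -/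
open ComplexConjugate in
theorem carlson_bil {V H : Type*} [AddCommGroup V] [Module ℂ V] [NormedAddCommGroup H]
    [InnerProductSpace ℂ H] (E M : V →ₗ[ℂ] H) (hM : ∀ v, ‖M v‖ ≤ ‖E v‖) (v w : V) :
    2 * (inner ℂ (E w) (M v)).re ≤ (inner ℂ (E w) (E w)).re + (inner ℂ (E v) (E v)).re := by
  have h1 := Complex.re_le_norm (inner ℂ (E w) (M v))
  have h2 := norm_inner_le_norm (𝕜 := ℂ) (E w) (M v)
  have h3 : (inner ℂ (E w) (E w)).re = ‖E w‖ ^ 2 := by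
    simpa using (inner_self_eq_norm_sq (𝕜 := ℂ) (E w))
  have h4 : (inner ℂ (E v) (E v)).re = ‖E v‖ ^ 2 := by
    simpa using (inner_self_eq_norm_sq (𝕜 := ℂ) (E v))
  have h5 := hM v
  rw [h3, h4]
  nlinarith [norm_nonneg (E w), norm_nonneg (M v), norm_nonneg (E v), sq_nonneg (‖E w‖ - ‖E v‖),
    mul_le_mul_of_nonneg_left h5 (norm_nonneg (E w))]

theorem exists_phase_s19 (c : ℂ) : ∃ η : ℂ, (starRingEnd ℂ) η * η = 1 ∧ (starRingEnd ℂ) η * c = (‖c‖ : ℂ) := by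
  by_cases hc : c = 0
  · exact ⟨1, by simp, by simp [hc]⟩
  · have hn : (‖c‖ : ℂ) ≠ 0 := by simpa using hc
    have h := Complex.conj_mul' c
    refine ⟨c / ‖c‖, ?_, ?_⟩
    · simp only [map_div₀, Complex.conj_ofReal]
      field_simp
      linear_combination h
    · simp only [map_div₀, Complex.conj_ofReal]
      field_simp
      linear_combination h

open ComplexConjugate in
theorem carlson_even_s19 {V H : Type*} [AddCommGroup V] [Module ℂ V] [NormedAddCommGroup H]
    [InnerProductSpace ℂ H] (E M : V →ₗ[ℂ] H) (hM : ∀ v, ‖M v‖ ≤ ‖E v‖) (e : ℕ → V)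
    (ho : ∀ i j, inner ℂ (E (e i)) (E (e j)) = if i = j then (1 : ℂ) else 0) (a : ℕ → ℂ)
    (hT : ∀ i j, inner ℂ (E (e i)) (M (e j)) = if j ≤ i then a (i - j) else 0)
    (n : ℕ) (hn : 1 ≤ n) :
    ‖a (2 * n)‖ ≤ 1 - ∑ k ∈ Finset.range n, ‖a k‖ ^ 2 - ‖a n‖ ^ 2 / (1 + ‖a 0‖) := by
  obtain ⟨η, h1, hc⟩ := exists_phase_s19 (a (2 * n))
  set t : ℝ := 1 / (1 + ‖a 0‖) with ht
  set s : ℂ := ∑ k ∈ Finset.range n, a k * conj (a k) with hs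
  have hsr : s = ((∑ k ∈ Finset.range n, ‖a k‖ ^ 2 : ℝ) : ℂ) := by
    rw [hs]; push_cast
    exact Finset.sum_congr rfl fun k _ => Complex.mul_conj' _
  set p : V := ∑ k ∈ Finset.range n, a k • e k with hp
  set q : V := ∑ k ∈ Finset.range n, conj (a k) • e (2 * n - k) with hq
  have hpp : inner ℂ (E p) (E p) = s := by
    rw [hp, map_sum, sum_inner]
    refine Finset.sum_congr rfl fun k hk => ?_
    rw [inner_sum, Finset.sum_eq_single k]
    · simp only [map_smul, inner_smul_left, inner_smul_right, ho, if_true]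
      ring
    · intro b _ hb; simp [inner_smul_left, inner_smul_right, ho, hb.symm]
    · intro h; exact absurd hk h
  have hqq : inner ℂ (E q) (E q) = s := by
    rw [hq, map_sum, sum_inner]
    refine Finset.sum_congr rfl fun k hk => ?_
    rw [inner_sum, Finset.sum_eq_single k]
    · simp only [map_smul, inner_smul_left, inner_smul_right, ho, if_true, Complex.conj_conj]
      ring
    · intro b hb hbk
      have : ¬ (2 * n - k = 2 * n - b) := by
        simp only [Finset.mem_range] at hk hb; omega
      simp [inner_smul_left, inner_smul_right, ho, this]
    · intro h; exact absurd hk h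
  have hep (i : ℕ) (hi : n ≤ i) : inner ℂ (E p) (E (e i)) = 0 := by
    rw [hp, map_sum, sum_inner]
    refine Finset.sum_eq_zero fun k hk => ?_
    have : ¬ (k = i) := by simp only [Finset.mem_range] at hk; omega
    simp [inner_smul_left, ho, this]
  have hpe (i : ℕ) (hi : n ≤ i) : inner ℂ (E (e i)) (E p) = 0 := by
    rw [← inner_conj_symm, hep i hi, map_zero]
  have heq (i : ℕ) (hi : i ≤ n) : inner ℂ (E q) (E (e i)) = 0 := by
    rw [hq, map_sum, sum_inner]
    refine Finset.sum_eq_zero fun k hk => ?_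
    have : ¬ (2 * n - k = i) := by simp only [Finset.mem_range] at hk; omega
    simp [inner_smul_left, ho, this]
  have hqe (i : ℕ) (hi : i ≤ n) : inner ℂ (E (e i)) (E q) = 0 := by
    rw [← inner_conj_symm, heq i hi, map_zero]
  have hp0 : inner ℂ (E p) (M (e 0)) = s := by
    rw [hp, map_sum, sum_inner]
    refine Finset.sum_congr rfl fun k hk => ?_
    simp [inner_smul_left, hT]
    try ring
  have hpn (j : ℕ) (hj : n ≤ j) : inner ℂ (E p) (M (e j)) = 0 := by
    rw [hp, map_sum, sum_inner]
    refine Finset.sum_eq_zero fun k hk => ?_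
    have : ¬ (j ≤ k) := by simp only [Finset.mem_range] at hk; omega
    simp [inner_smul_left, hT, this]
  have hpq : inner ℂ (E p) (M q) = 0 := by
    rw [hq, map_sum M, inner_sum]
    refine Finset.sum_eq_zero fun k hk => ?_
    rw [map_smul, inner_smul_right, hpn _ (by simp only [Finset.mem_range] at hk; omega), mul_zero]
  have hnq : inner ℂ (E (e n)) (M q) = 0 := by
    rw [hq, map_sum M, inner_sum]
    refine Finset.sum_eq_zero fun k hk => ?_
    have : ¬ (2 * n - k ≤ n) := by simp only [Finset.mem_range] at hk; omega
    rw [map_smul, inner_smul_right, hT, if_neg this, mul_zero]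
  have hNq : inner ℂ (E (e (2 * n))) (M q) = s := by
    rw [hq, map_sum M, inner_sum]
    refine Finset.sum_congr rfl fun k hk => ?_
    have h : 2 * n - (2 * n - k) = k := by simp only [Finset.mem_range] at hk; omega
    rw [map_smul, inner_smul_right, hT, if_pos (by omega), h, mul_comm]
  have key := carlson_bil E M hM (e 0 + (η * (conj (a n) * t)) • e n + η • q)
    (p + (a n * t) • e n + η • e (2 * n))
  have e1 : inner ℂ (E (p + (a n * t) • e n + η • e (2 * n)))
      (E (p + (a n * t) • e n + η • e (2 * n))) = s + a n * conj (a n) * t ^ 2 + 1 := by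
    have i1 : ¬ (n = 2 * n) := by omega
    have i2 : ¬ (2 * n = n) := by omega
    simp only [map_add, map_smul, inner_add_left, inner_add_right, inner_smul_left,
      inner_smul_right, hpp, hep n le_rfl, hep (2 * n) (by omega), hpe n le_rfl,
      hpe (2 * n) (by omega), ho, if_neg i1, if_neg i2, if_true, map_mul, Complex.conj_ofReal]
    linear_combination h1
  have e2 : inner ℂ (E (e 0 + (η * (conj (a n) * t)) • e n + η • q))
      (E (e 0 + (η * (conj (a n) * t)) • e n + η • q)) = 1 + a n * conj (a n) * t ^ 2 + s := by
    have i1 : ¬ (n = 0) := by omega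
    have i2 : ¬ (0 = n) := by omega
    simp only [map_add, map_smul, inner_add_left, inner_add_right, inner_smul_left,
      inner_smul_right, hqq, hqe n le_rfl, hqe 0 (by omega), heq n le_rfl,
      heq 0 (by omega), ho, if_neg i1, if_neg i2, if_true, map_mul, Complex.conj_ofReal,
      Complex.conj_conj]
    linear_combination (s + a n * conj (a n) * t ^ 2) * h1
  have e3 : inner ℂ (E (p + (a n * t) • e n + η • e (2 * n)))
      (M (e 0 + (η * (conj (a n) * t)) • e n + η • q)) =
      2 * s + ‖a (2 * n)‖ + 2 * (a n * conj (a n)) * t + conj (a n) ^ 2 * t ^ 2 * η * a 0 := by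
    have i3 : 2 * n - n = n := by omega
    have i4 : n ≤ 2 * n := by omega
    simp only [map_add, map_smul, inner_add_left, inner_add_right, inner_smul_left,
      inner_smul_right, hp0, hpn n le_rfl, hpq, hnq, hNq, hT, i3, if_pos i4, le_refl, if_true,
      Nat.zero_le, Nat.sub_zero, Nat.sub_self, map_mul, Complex.conj_ofReal, ← hc]
    linear_combination (s + a n * conj (a n) * t) * h1
  have hnorm : ‖η‖ = 1 := by
    have := congrArg norm h1
    simp only [norm_mul, RCLike.norm_conj, norm_one] at this
    nlinarith [norm_nonneg η]
  have h5 : -(‖a n‖ ^ 2 * t ^ 2 * ‖a 0‖) ≤ (conj (a n) ^ 2 * t ^ 2 * η * a 0).re := by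
    have := (abs_le.1 (Complex.abs_re_le_norm (conj (a n) ^ 2 * t ^ 2 * η * a 0))).1
    simpa [hnorm] using this
  rw [e1, e2, e3, Complex.mul_conj', hsr] at key
  have k1 : ((∑ k ∈ Finset.range n, ‖a k‖ ^ 2 : ℝ) + (‖a n‖ : ℂ) ^ 2 * t ^ 2 + 1 : ℂ).re
    = ∑ k ∈ Finset.range n, ‖a k‖ ^ 2 + ‖a n‖ ^ 2 * t ^ 2 + 1 := by norm_cast
  have k2 : (1 + (‖a n‖ : ℂ) ^ 2 * t ^ 2 + (∑ k ∈ Finset.range n, ‖a k‖ ^ 2 : ℝ) : ℂ).re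
    = ∑ k ∈ Finset.range n, ‖a k‖ ^ 2 + ‖a n‖ ^ 2 * t ^ 2 + 1 := by norm_cast; ring
  have k3 : (2 * (∑ k ∈ Finset.range n, ‖a k‖ ^ 2 : ℝ) + (‖a (2 * n)‖ : ℂ) + 2 * (‖a n‖ : ℂ) ^ 2 * t : ℂ).re
    = 2 * ∑ k ∈ Finset.range n, ‖a k‖ ^ 2 + ‖a (2 * n)‖ + 2 * ‖a n‖ ^ 2 * t := by norm_cast
  rw [k1, k2, Complex.add_re, k3] at key
  have ht1 : t * (1 + ‖a 0‖) = 1 := by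
    rw [ht]; field_simp
  have h6 : ‖a n‖ ^ 2 / (1 + ‖a 0‖) = ‖a n‖ ^ 2 * t := by rw [ht]; ring
  rw [h6]
  have h7 : ‖a n‖ ^ 2 * t ^ 2 + ‖a n‖ ^ 2 * t ^ 2 * ‖a 0‖ = ‖a n‖ ^ 2 * t := by
    linear_combination (‖a n‖ ^ 2 * t) * ht1
  linarith

open ComplexConjugate in
theorem carlson_odd_s19 {V H : Type*} [AddCommGroup V] [Module ℂ V] [NormedAddCommGroup H]
    [InnerProductSpace ℂ H] (E M : V →ₗ[ℂ] H) (hM : ∀ v, ‖M v‖ ≤ ‖E v‖) (e : ℕ → V)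
    (ho : ∀ i j, inner ℂ (E (e i)) (E (e j)) = if i = j then (1 : ℂ) else 0) (a : ℕ → ℂ)
    (hT : ∀ i j, inner ℂ (E (e i)) (M (e j)) = if j ≤ i then a (i - j) else 0)
    (n : ℕ) :
    ‖a (2 * n + 1)‖ ≤ 1 - ∑ k ∈ Finset.range (n + 1), ‖a k‖ ^ 2 := by
  obtain ⟨η, h1, hc⟩ := exists_phase_s19 (a (2 * n + 1))
  set s : ℂ := ∑ k ∈ Finset.range (n + 1), a k * conj (a k) with hs
  have hsr : s = ((∑ k ∈ Finset.range (n + 1), ‖a k‖ ^ 2 : ℝ) : ℂ) := by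
    rw [hs]; push_cast
    exact Finset.sum_congr rfl fun k _ => Complex.mul_conj' _
  set p : V := ∑ k ∈ Finset.range (n + 1), a k • e k with hp
  set q : V := ∑ k ∈ Finset.range (n + 1), conj (a k) • e (2 * n + 1 - k) with hq
  have hpp : inner ℂ (E p) (E p) = s := by
    rw [hp, map_sum, sum_inner]
    refine Finset.sum_congr rfl fun k hk => ?_
    rw [inner_sum, Finset.sum_eq_single k]
    · simp only [map_smul, inner_smul_left, inner_smul_right, ho, if_true]
      ring
    · intro b _ hb; simp [inner_smul_left, inner_smul_right, ho, hb.symm]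
    · intro h; exact absurd hk h
  have hqq : inner ℂ (E q) (E q) = s := by
    rw [hq, map_sum, sum_inner]
    refine Finset.sum_congr rfl fun k hk => ?_
    rw [inner_sum, Finset.sum_eq_single k]
    · simp only [map_smul, inner_smul_left, inner_smul_right, ho, if_true, Complex.conj_conj]
      ring
    · intro b hb hbk
      have : ¬ (2 * n + 1 - k = 2 * n + 1 - b) := by
        simp only [Finset.mem_range] at hk hb; omega
      simp [inner_smul_left, inner_smul_right, ho, this]
    · intro h; exact absurd hk h
  have hep (i : ℕ) (hi : n + 1 ≤ i) : inner ℂ (E p) (E (e i)) = 0 := by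
    rw [hp, map_sum, sum_inner]
    refine Finset.sum_eq_zero fun k hk => ?_
    have : ¬ (k = i) := by simp only [Finset.mem_range] at hk; omega
    simp [inner_smul_left, ho, this]
  have hpe (i : ℕ) (hi : n + 1 ≤ i) : inner ℂ (E (e i)) (E p) = 0 := by
    rw [← inner_conj_symm, hep i hi, map_zero]
  have heq : inner ℂ (E q) (E (e 0)) = 0 := by
    rw [hq, map_sum, sum_inner]
    refine Finset.sum_eq_zero fun k hk => ?_
    have : ¬ (2 * n + 1 - k = 0) := by simp only [Finset.mem_range] at hk; omega
    rw [map_smul, inner_smul_left, ho, if_neg this, mul_zero]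
  have hqe : inner ℂ (E (e 0)) (E q) = 0 := by
    rw [← inner_conj_symm, heq, map_zero]
  have hp0 : inner ℂ (E p) (M (e 0)) = s := by
    rw [hp, map_sum, sum_inner]
    refine Finset.sum_congr rfl fun k hk => ?_
    simp [inner_smul_left, hT]
    try ring
  have hpq : inner ℂ (E p) (M q) = 0 := by
    rw [hq, map_sum M, inner_sum]
    refine Finset.sum_eq_zero fun k hk => ?_
    rw [map_smul, inner_smul_right, hp, map_sum, sum_inner, Finset.sum_eq_zero, mul_zero]
    intro i hi
    have : ¬ (2 * n + 1 - k ≤ i) := by simp only [Finset.mem_range] at hk hi; omega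
    rw [map_smul, inner_smul_left, hT, if_neg this, mul_zero]
  have hNq : inner ℂ (E (e (2 * n + 1))) (M q) = s := by
    rw [hq, map_sum M, inner_sum]
    refine Finset.sum_congr rfl fun k hk => ?_
    have h : 2 * n + 1 - (2 * n + 1 - k) = k := by simp only [Finset.mem_range] at hk; omega
    rw [map_smul, inner_smul_right, hT, if_pos (by omega), h, mul_comm]
  have key := carlson_bil E M hM (e 0 + η • q) (p + η • e (2 * n + 1))
  have e1 : inner ℂ (E (p + η • e (2 * n + 1))) (E (p + η • e (2 * n + 1))) = s + 1 := by
    simp only [map_add, map_smul, inner_add_left, inner_add_right, inner_smul_left,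
      inner_smul_right, hpp, hep (2 * n + 1) (by omega), 
      hpe (2 * n + 1) (by omega), ho, if_true]
    linear_combination h1
  have e2 : inner ℂ (E (e 0 + η • q)) (E (e 0 + η • q)) = s + 1 := by
    simp only [map_add, map_smul, inner_add_left, inner_add_right, inner_smul_left,
      inner_smul_right, hqq, hqe, heq, ho, if_true]
    linear_combination s * h1
  have e3 : inner ℂ (E (p + η • e (2 * n + 1))) (M (e 0 + η • q)) =
      2 * s + ‖a (2 * n + 1)‖ := by
    simp only [map_add, map_smul, inner_add_left, inner_add_right, inner_smul_left,
      inner_smul_right, hp0, hpq, hNq, hT, if_true,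
      Nat.zero_le, Nat.sub_zero, ← hc]
    linear_combination s * h1
  rw [e1, e2, e3, hsr] at key
  have k1 : ((∑ k ∈ Finset.range (n + 1), ‖a k‖ ^ 2 : ℝ) + 1 : ℂ).re
    = ∑ k ∈ Finset.range (n + 1), ‖a k‖ ^ 2 + 1 := by norm_cast
  have k3 : (2 * (∑ k ∈ Finset.range (n + 1), ‖a k‖ ^ 2 : ℝ) + (‖a (2 * n + 1)‖ : ℂ) : ℂ).re
    = 2 * ∑ k ∈ Finset.range (n + 1), ‖a k‖ ^ 2 + ‖a (2 * n + 1)‖ := by norm_cast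
  rw [k1, k3] at key
  linarith

theorem exists_model (f : ℂ → ℂ) (a : ℕ → ℂ)
    (hb : ∀ z ∈ Metric.ball (0 : ℂ) 1, ‖f z‖ ≤ 1)
    (hs : ∀ z ∈ Metric.ball (0 : ℂ) 1, HasSum (fun n => a n * z ^ n) (f z))
    (ρ : ℝ) (h0 : 0 ≤ ρ) (h1 : ρ < 1) :
    ∃ (E M : C(AddCircle (1 : ℝ), ℂ) →ₗ[ℂ]
        MeasureTheory.Lp ℂ 2 (AddCircle.haarAddCircle (T := (1 : ℝ))))
      (e : ℕ → C(AddCircle (1 : ℝ), ℂ)),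
      (∀ v, ‖M v‖ ≤ ‖E v‖) ∧
      (∀ i j, inner ℂ (E (e i)) (E (e j)) = if i = j then (1 : ℂ) else 0) ∧
      (∀ i j, inner ℂ (E (e i)) (M (e j)) = if j ≤ i then (fun n => a n * (ρ : ℂ) ^ n) (i - j) else 0) := by
  have hρ : (ρ : ℂ) ∈ Metric.ball (0 : ℂ) 1 := by simp [abs_of_nonneg h0, h1]
  have hsum : Summable fun n : ℕ => (a n * (ρ : ℂ) ^ n) • (fourier (n : ℤ) : C(AddCircle (1 : ℝ), ℂ)) := by
    apply Summable.of_norm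
    simpa [norm_smul, fourier_norm] using (hs ρ hρ).summable.norm
  obtain ⟨F, hF⟩ := hsum
  have hFt (t : AddCircle (1 : ℝ)) : ‖F t‖ ≤ 1 := by
    have e1 := (ContinuousMap.hasSum_apply hF t)
    have hz : (ρ : ℂ) * fourier 1 t ∈ Metric.ball (0 : ℂ) 1 := by
      rw [mem_ball_zero_iff, norm_mul, fourier_apply, Circle.norm_coe, Complex.norm_real,
        Real.norm_of_nonneg h0, mul_one]
      exact h1
    have e2 := hs _ hz
    have : F t = f ((ρ : ℂ) * fourier 1 t) := by
      refine e1.unique ?_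
      convert e2 using 2 with n
      simp [fourier_apply, mul_pow, mul_assoc, AddCircle.toCircle_nsmul]
    rw [this]; exact hb _ hz
  let L := ContinuousMap.toLp (E := ℂ) 2 (AddCircle.haarAddCircle (T := (1 : ℝ))) ℂ
  have ho := (orthonormal_iff_ite (𝕜 := ℂ)).1 (orthonormal_fourier (T := (1 : ℝ)))
  refine ⟨L.toLinearMap, L.toLinearMap ∘ₗ LinearMap.mulLeft ℂ F, fun n => fourier (n : ℤ), ?_, ?_, ?_⟩
  · intro v
    apply MeasureTheory.Lp.norm_le_norm_of_ae_le
    have c1 := ContinuousMap.coeFn_toLp (p := 2) (𝕜 := ℂ) (AddCircle.haarAddCircle (T := (1 : ℝ))) v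
    have c2 := ContinuousMap.coeFn_toLp (p := 2) (𝕜 := ℂ) (AddCircle.haarAddCircle (T := (1 : ℝ))) (F * v)
    filter_upwards [c1, c2] with t d1 d2
    change ‖(ContinuousMap.toLp 2 AddCircle.haarAddCircle ℂ (F * v)) t‖ ≤
      ‖(ContinuousMap.toLp 2 AddCircle.haarAddCircle ℂ v) t‖
    rw [d1, d2, ContinuousMap.mul_apply, norm_mul]
    nlinarith [norm_nonneg (v t), hFt t]
  · intro i j
    have := ho (i : ℤ) (j : ℤ)
    simpa using this
  · intro i j
    have h2 : HasSum (fun n : ℕ => (a n * (ρ : ℂ) ^ n) •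
        (fourier ((n + j : ℕ) : ℤ) : C(AddCircle (1 : ℝ), ℂ))) (F * fourier (j : ℤ)) := by
      have h := hF.mul_right (fourier (j : ℤ) : C(AddCircle (1 : ℝ), ℂ))
      refine Eq.mp (congrArg (fun g => HasSum g (F * fourier (j : ℤ))) ?_) h
      funext n
      symm
      ext t
      have := fourier_add (T := (1 : ℝ)) (m := (n : ℤ)) (n := (j : ℤ)) (x := t)
      rw [ContinuousMap.smul_apply, ContinuousMap.mul_apply, ContinuousMap.smul_apply, Nat.cast_add,
        this, smul_mul_assoc]
    have h3 := (h2.mapL L).mapL (innerSL ℂ (L (fourier (i : ℤ))))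
    simp only [innerSL_apply_apply, map_smul, inner_smul_right] at h3
    refine h3.unique ?_
    have h4 : ∀ n : ℕ, inner ℂ (L (fourier (i : ℤ))) (L (fourier ((n + j : ℕ) : ℤ))) = if i = n + j then (1 : ℂ) else 0 := by
      intro n
      have := ho (i : ℤ) ((n + j : ℕ) : ℤ)
      simp only [Nat.cast_inj] at this
      exact this
    simp only [h4]
    split_ifs with hij
    · convert hasSum_single (i - j) ?_ using 1
      · rw [if_pos (by omega)]; simp
      · intro b hb
        rw [if_neg (by omega)]; simp
    · convert hasSum_zero using 2 with n
      rw [if_neg (by omega)]; simp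

theorem tail_ineq (b : ℕ → ℝ) (hb0 : ∀ n, 0 ≤ b n) (r : ℝ) (h0 : 0 ≤ r) (h1 : r < 1)
    (he : ∀ n, b (2 * n + 2) ≤ 1 - b 0 ^ 2 - ∑ k ∈ Finset.range n, b (k + 1) ^ 2 -
      b (n + 1) ^ 2 / (1 + b 0))
    (hd : ∀ n, b (2 * n + 1) ≤ 1 - b 0 ^ 2 - ∑ k ∈ Finset.range n, b (k + 1) ^ 2)
    (hs : Summable fun n => b n * r ^ n) :
    (∑' n : ℕ, b (n + 2) * r ^ (n + 2)) + (1 / (1 + b 0) + r / (1 - r)) *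
      (∑' n : ℕ, b (n + 1) ^ 2 * r ^ (2 * (n + 1))) ≤ (1 - b 0 ^ 2) * (r ^ 2 / (1 - r)) := by
  have hr : 0 < 1 - r := by linarith
  have hb : 0 < 1 + b 0 := by linarith [hb0 0]
  have hle : ∀ n, b n ≤ 1 := by
    intro n
    have hS : ∀ m, 0 ≤ ∑ k ∈ Finset.range m, b (k + 1) ^ 2 := fun m =>
      Finset.sum_nonneg fun k _ => sq_nonneg _
    rcases Nat.even_or_odd' n with ⟨m, rfl | rfl⟩
    · rcases m with _ | m
      · have := hd 0
        simp only [Finset.range_zero, Finset.sum_empty] at this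
        have h2 := hb0 (2 * 0 + 1)
        simp only [mul_zero] at *
        nlinarith [hb0 0]
      · have := he m
        have h3 : 0 ≤ b (m + 1) ^ 2 / (1 + b 0) := by positivity
        have : b (2 * (m + 1)) = b (2 * m + 2) := rfl
        nlinarith [hS m, sq_nonneg (b 0)]
    · nlinarith [hd m, hS m, sq_nonneg (b 0)]
  have hs1 : Summable fun n : ℕ => b (n + 2) * r ^ (n + 2) := (summable_nat_add_iff 2).2 hs
  have hs2 : Summable fun n : ℕ => b (n + 1) ^ 2 * r ^ (2 * (n + 1)) := by
    refine Summable.of_nonneg_of_le (fun n => by positivity) (fun n => ?_) ((summable_nat_add_iff 1).2 hs)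
    have e1 : b (n + 1) ^ 2 ≤ b (n + 1) := by nlinarith [hb0 (n + 1), hle (n + 1)]
    have e2 : r ^ (2 * (n + 1)) ≤ r ^ (n + 1) := pow_le_pow_of_le_one h0 h1.le (by omega)
    exact mul_le_mul e1 e2 (by positivity) (hb0 _)
  have key : ∀ K : ℕ, ∑ n ∈ Finset.range (2 * K), b (n + 2) * r ^ (n + 2) +
      (1 / (1 + b 0) + r / (1 - r)) * ∑ n ∈ Finset.range K, b (n + 1) ^ 2 * r ^ (2 * (n + 1)) ≤
      (1 - b 0 ^ 2) * (r ^ 2 / (1 - r)) -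
        r ^ (2 * K + 2) / (1 - r) * (1 - b 0 ^ 2 - ∑ k ∈ Finset.range K, b (k + 1) ^ 2) := by
    intro K
    induction K with
    | zero => simp; apply le_of_eq; ring
    | succ K ih =>
      have e1 : 2 * (K + 1) = 2 * K + 1 + 1 := by ring
      rw [e1, Finset.sum_range_succ, Finset.sum_range_succ, Finset.sum_range_succ _ K,
        Finset.sum_range_succ _ K]
      have q1 := he K
      have q2 := hd (K + 1)
      rw [Finset.sum_range_succ] at q2
      have i1 : 2 * (K + 1) + 1 = 2 * K + 1 + 2 := by ring
      rw [i1] at q2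
      set S := ∑ k ∈ Finset.range K, b (k + 1) ^ 2
      have hR : 0 ≤ r ^ (2 * K + 2) := by positivity
      have q3 := mul_le_mul_of_nonneg_right q1 hR
      have q4 := mul_le_mul_of_nonneg_right q2 (mul_nonneg h0 hR)
      have p1 : r ^ (2 * K + 1 + 2) = r * r ^ (2 * K + 2) := by ring
      have p2 : r ^ (2 * K + 1 + 1 + 2) = r ^ 2 * r ^ (2 * K + 2) := by ring
      have p3 : r ^ (2 * K + 1 + 1) = r ^ (2 * K + 2) := by ring
      rw [p1, p2, e1, p3]
      set R := r ^ (2 * K + 2)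
      set q := b (K + 1) ^ 2
      have fin : (1 - b 0 ^ 2 - S - q / (1 + b 0)) * R + (1 - b 0 ^ 2 - (S + q)) * (r * R) +
        (1 / (1 + b 0) + r / (1 - r)) * (q * R) =
        R / (1 - r) * (1 - b 0 ^ 2 - S) - r ^ 2 * R / (1 - r) * (1 - b 0 ^ 2 - (S + q)) := by
        field_simp
        ring
      linarith
  have t1 : Filter.Tendsto (fun K : ℕ => ∑ n ∈ Finset.range (2 * K), b (n + 2) * r ^ (n + 2))
      Filter.atTop (nhds (∑' n : ℕ, b (n + 2) * r ^ (n + 2))) :=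
    hs1.hasSum.tendsto_sum_nat.comp
      (Filter.tendsto_atTop_mono (fun n => by simp only [id]; omega) Filter.tendsto_id)
  have t2 := hs2.hasSum.tendsto_sum_nat
  refine le_of_tendsto' (t1.add (t2.const_mul (1 / (1 + b 0) + r / (1 - r)))) fun K => ?_
  have h3 : 0 ≤ r ^ (2 * K + 2) / (1 - r) * (1 - b 0 ^ 2 - ∑ k ∈ Finset.range K, b (k + 1) ^ 2) := by
    have := (hb0 _).trans (hd K)
    positivity
  linarith [key K]

theorem final1 (a x d r Q s : ℝ) (ha0 : 0 ≤ a) (ha1 : a ≤ 1) (hx0 : 0 ≤ x) (hr0 : 0 ≤ r)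
    (hs : s ^ 2 = 17) (hs0 : 0 ≤ s) (hr : r ≤ (s - 3) / 4)
    (hx : x * (1 + a * r) ≤ a + r) (hd : d * (1 - r ^ 2) ≤ 1 - x ^ 2)
    (hQ : Q ≤ (1 - a ^ 2) * (r ^ 2 / (1 - r))) : x + d * r + Q ≤ 1 := by
  have hs5 : s ≤ 5 := by nlinarith
  have hs4 : s < 4.2 := by nlinarith
  have hr3 : r < 0.3 := by linarith
  have hp : 2 * r ^ 2 + 3 * r - 1 ≤ 0 := by nlinarith
  have h1 : 0 < 1 - r ^ 2 := by nlinarith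
  have h1r : 0 < 1 - r := by linarith
  have har : 0 < 1 + a * r := by positivity
  set X := (a + r) / (1 + a * r) with hX
  have hxX : x ≤ X := (le_div_iff₀ har).2 hx
  have hX1 : X ≤ 1 := by
    rw [hX, div_le_one har]; nlinarith
  have hd' : d ≤ (1 - x ^ 2) / (1 - r ^ 2) := (le_div_iff₀ h1).2 hd
  have h2 : x + d * r ≤ x + (1 - x ^ 2) / (1 - r ^ 2) * r := by
    have := mul_le_mul_of_nonneg_right hd' hr0
    linarith
  have h3 : x + (1 - x ^ 2) / (1 - r ^ 2) * r ≤ X + (1 - X ^ 2) / (1 - r ^ 2) * r := by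
    have : X + (1 - X ^ 2) / (1 - r ^ 2) * r - (x + (1 - x ^ 2) / (1 - r ^ 2) * r) =
      (X - x) * (1 - r ^ 2 - (X + x) * r) / (1 - r ^ 2) := by field_simp; ring
    have h4 : 0 ≤ (X - x) * (1 - r ^ 2 - (X + x) * r) / (1 - r ^ 2) := by
      apply div_nonneg _ h1.le
      apply mul_nonneg (by linarith)
      nlinarith
    linarith
  have h4 : X + (1 - X ^ 2) / (1 - r ^ 2) * r + (1 - a ^ 2) * (r ^ 2 / (1 - r)) ≤ 1 := by
    have e : 1 - (X + (1 - X ^ 2) / (1 - r ^ 2) * r + (1 - a ^ 2) * (r ^ 2 / (1 - r))) =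
      (1 - a) * ((1 - r) ^ 2 * (1 + a * r) - (1 + a) * (r * (1 - r) + r ^ 2 * (1 + a * r) ^ 2)) /
        ((1 - r) * (1 + a * r) ^ 2) := by
      rw [hX]; field_simp; ring
    have : 0 ≤ (1 - r) ^ 2 * (1 + a * r) - (1 + a) * (r * (1 - r) + r ^ 2 * (1 + a * r) ^ 2) := by
      have m0 : 0 ≤ 1 - 3 * r - r ^ 2 - 3 * r ^ 3 - 2 * r ^ 4 := by
        have := mul_nonneg (sub_nonneg.2 hp) (by positivity : 0 ≤ r ^ 2 + 1)
        linarith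
      have m1 : (1 + a * r) ^ 2 ≤ (1 + r) ^ 2 := by
        apply pow_le_pow_left₀ har.le; nlinarith
      have m2 : (1 + a) * (r ^ 2 * (1 + a * r) ^ 2) ≤ 2 * (r ^ 2 * (1 + r) ^ 2) := by
        apply mul_le_mul (by linarith) (by gcongr) (by positivity) (by norm_num)
      have m3 : 0 ≤ (1 - a) * (r * (1 - r) - r * (1 - r) ^ 2) := by
        apply mul_nonneg (by linarith)
        have : r * (1 - r) - r * (1 - r) ^ 2 = r ^ 2 * (1 - r) := by ring
        rw [this]; positivity
      linarith
    have : 0 ≤ (1 - a) * ((1 - r) ^ 2 * (1 + a * r) - (1 + a) * (r * (1 - r) + r ^ 2 * (1 + a * r) ^ 2)) /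
        ((1 - r) * (1 + a * r) ^ 2) := by
      apply div_nonneg (mul_nonneg (by linarith) this) (by positivity)
    linarith
  linarith

theorem final2 (a x d r Q : ℝ) (ha0 : 0 ≤ a) (ha1 : a ≤ 1) (hx0 : 0 ≤ x) (hr0 : 0 ≤ r)
    (hr1 : r < 1) (hr : 0 ≤ 1 - 2 * r - r ^ 2 - r ^ 3 - r ^ 4)
    (hx : x * (1 + a * r) ≤ a + r) (hd : d * (1 - r ^ 2) ≤ 1 - x ^ 2)
    (hQ : Q ≤ (1 - a ^ 2) * (r ^ 2 / (1 - r))) : x ^ 2 + d * r + Q ≤ 1 := by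
  have h1 : 0 < 1 - r ^ 2 := by nlinarith
  have h1r : 0 < 1 - r := by linarith
  have har : 0 < 1 + a * r := by positivity
  set X := (a + r) / (1 + a * r) with hX
  have hxX : x ≤ X := (le_div_iff₀ har).2 hx
  have hr4 : 0 ≤ 1 - r ^ 2 - r := by nlinarith [pow_nonneg hr0 3, pow_nonneg hr0 4]
  have hd' : d ≤ (1 - x ^ 2) / (1 - r ^ 2) := (le_div_iff₀ h1).2 hd
  have h2 : x ^ 2 + d * r ≤ x ^ 2 + (1 - x ^ 2) / (1 - r ^ 2) * r := by
    have := mul_le_mul_of_nonneg_right hd' hr0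
    linarith
  have h3 : x ^ 2 + (1 - x ^ 2) / (1 - r ^ 2) * r ≤ X ^ 2 + (1 - X ^ 2) / (1 - r ^ 2) * r := by
    have : X ^ 2 + (1 - X ^ 2) / (1 - r ^ 2) * r - (x ^ 2 + (1 - x ^ 2) / (1 - r ^ 2) * r) =
      (X - x) * (X + x) * (1 - r ^ 2 - r) / (1 - r ^ 2) := by field_simp; ring
    have h4 : 0 ≤ (X - x) * (X + x) * (1 - r ^ 2 - r) / (1 - r ^ 2) := by
      apply div_nonneg _ h1.le
      exact mul_nonneg (mul_nonneg (by linarith) (by linarith)) hr4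
    linarith
  have h4 : X ^ 2 + (1 - X ^ 2) / (1 - r ^ 2) * r + (1 - a ^ 2) * (r ^ 2 / (1 - r)) ≤ 1 := by
    have e : 1 - (X ^ 2 + (1 - X ^ 2) / (1 - r ^ 2) * r + (1 - a ^ 2) * (r ^ 2 / (1 - r))) =
      (1 - a ^ 2) * ((1 - r ^ 2 - r) * (1 - r) - r ^ 2 * (1 + a * r) ^ 2) /
        ((1 - r) * (1 + a * r) ^ 2) := by
      rw [hX]; field_simp; ring
    have : 0 ≤ (1 - r ^ 2 - r) * (1 - r) - r ^ 2 * (1 + a * r) ^ 2 := by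
      have m1 : (1 + a * r) ^ 2 ≤ (1 + r) ^ 2 := by
        apply pow_le_pow_left₀ har.le; nlinarith
      have m2 : r ^ 2 * (1 + a * r) ^ 2 ≤ r ^ 2 * (1 + r) ^ 2 := by gcongr
      linarith
    have : 0 ≤ (1 - a ^ 2) * ((1 - r ^ 2 - r) * (1 - r) - r ^ 2 * (1 + a * r) ^ 2) /
        ((1 - r) * (1 + a * r) ^ 2) := by
      apply div_nonneg (mul_nonneg (by nlinarith) this) (by positivity)
    linarith
  linarith

section
open ComplexConjugate

theorem normSq_expand1 (u b : ℂ) : ‖u - b‖ ^ 2 = ‖u‖ ^ 2 + ‖b‖ ^ 2 - 2 * (conj b * u).re := by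
  rw [Complex.sq_norm, Complex.sq_norm, Complex.sq_norm, Complex.normSq_apply, Complex.normSq_apply,
    Complex.normSq_apply]
  simp; ring

theorem normSq_expand2 (u b : ℂ) :
    ‖1 - conj b * u‖ ^ 2 = 1 + ‖b‖ ^ 2 * ‖u‖ ^ 2 - 2 * (conj b * u).re := by
  rw [Complex.sq_norm, Complex.sq_norm, Complex.sq_norm, Complex.normSq_apply, Complex.normSq_apply,
    Complex.normSq_apply]
  simp; ring

theorem mob_ne {b u : ℂ} (hb : ‖b‖ < 1) (hu : ‖u‖ ≤ 1) : 1 - conj b * u ≠ 0 := by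
  intro h
  have h1 : conj b * u = 1 := by linear_combination -h
  have h2 := congrArg norm h1
  rw [norm_mul, RCLike.norm_conj, norm_one] at h2
  nlinarith [norm_nonneg b, norm_nonneg u]

theorem mob_le {b u : ℂ} (hb : ‖b‖ < 1) (hu : ‖u‖ ≤ 1) :
    ‖(u - b) / (1 - conj b * u)‖ ≤ 1 := by
  have h := norm_pos_iff.2 (mob_ne hb hu)
  rw [norm_div, div_le_one h]
  apply le_of_sq_le_sq _ h.le
  rw [normSq_expand1, normSq_expand2]
  nlinarith [mul_nonneg (sub_nonneg.2 (pow_le_one₀ (norm_nonneg b) hb.le : ‖b‖ ^ 2 ≤ 1))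
    (sub_nonneg.2 (pow_le_one₀ (norm_nonneg u) hu : ‖u‖ ^ 2 ≤ 1))]

theorem schwarz_value (f : ℂ → ℂ) (hf : DifferentiableOn ℂ f (Metric.ball 0 1))
    (hb : ∀ z ∈ Metric.ball (0 : ℂ) 1, ‖f z‖ ≤ 1) (z : ℂ) (hz : z ∈ Metric.ball (0 : ℂ) 1) :
    ‖f z‖ * (1 + ‖f 0‖ * ‖z‖) ≤ ‖f 0‖ + ‖z‖ := by
  have h00 := hb 0 (by simp)
  have hz1 : ‖z‖ < 1 := by simpa using hz
  rcases h00.lt_or_eq with h | h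
  · have key := Complex.norm_le_norm_of_mapsTo_ball (R := 1) (z := z)
      (f := fun w => (f w - f 0) / (1 - conj (f 0) * f w)) ?_ ?_ (by simp) hz1
    · have hp := norm_pos_iff.2 (mob_ne h (hb z hz))
      simp only [norm_div] at key
      rw [div_le_iff₀ hp] at key
      have k2 := pow_le_pow_left₀ (norm_nonneg _) key 2
      rw [mul_pow, normSq_expand1, normSq_expand2] at k2
      have hre : (conj (f 0) * f z).re ≤ ‖f 0‖ * ‖f z‖ := by
        simpa using Complex.re_le_norm (conj (f 0) * f z)
      have hr2 : 0 ≤ 1 - ‖z‖ ^ 2 := by nlinarith [norm_nonneg z]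
      have hfz := hb z hz
      have k3 : (‖f z‖ - ‖f 0‖) ^ 2 ≤ (‖z‖ * (1 - ‖f 0‖ * ‖f z‖)) ^ 2 := by
        nlinarith [mul_le_mul_of_nonneg_left hre hr2]
      have k4 := abs_le_of_sq_le_sq' k3 (mul_nonneg (norm_nonneg _)
        (by nlinarith [norm_nonneg (f 0), norm_nonneg (f z)]))
      linarith [k4.2]
    · exact (hf.sub_const _).div ((differentiableOn_const _).sub (hf.const_mul _))
        fun w hw => mob_ne h (hb w hw)
    · intro w hw
      simpa using mob_le h (hb w hw)
  · rw [h]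
    nlinarith [hb z hz, norm_nonneg z]

theorem schwarz_deriv_strict (f : ℂ → ℂ) (hf : DifferentiableOn ℂ f (Metric.ball 0 1))
    (hb : ∀ z ∈ Metric.ball (0 : ℂ) 1, ‖f z‖ ≤ 1) (z : ℂ) (hz : z ∈ Metric.ball (0 : ℂ) 1)
    (h : ‖f z‖ < 1) :
    ‖deriv f z‖ * (1 - ‖z‖ ^ 2) ≤ 1 - ‖f z‖ ^ 2 := by
  have hz1 : ‖z‖ < 1 := by simpa using hz
  have hz2 : ‖-z‖ < 1 := by simpa using hz1
  have hne : ∀ w ∈ Metric.ball (0 : ℂ) 1, 1 + conj z * w ≠ 0 := by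
    intro w hw
    have hw1 : ‖w‖ < 1 := by simpa using hw
    have := mob_ne hz2 hw1.le
    simpa using this
  have hφ : Set.MapsTo (fun w => (w + z) / (1 + conj z * w)) (Metric.ball (0 : ℂ) 1) (Metric.ball 0 1) := by
    intro w hw
    have hw1 : ‖w‖ < 1 := by simpa using hw
    have hp := norm_pos_iff.2 (hne w hw)
    rw [mem_ball_zero_iff, norm_div, div_lt_one hp]
    apply lt_of_pow_lt_pow_left₀ 2 hp.le
    have e1 := normSq_expand1 w (-z)
    have e2 := normSq_expand2 w (-z)
    simp only [map_neg, sub_neg_eq_add, neg_mul, norm_neg] at e1 e2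
    rw [e1, e2]
    have a1 : ‖z‖ ^ 2 < 1 := by nlinarith [norm_nonneg z]
    have a2 : ‖w‖ ^ 2 < 1 := by nlinarith [norm_nonneg w]
    nlinarith
  have hφd : DifferentiableOn ℂ (fun w => (w + z) / (1 + conj z * w)) (Metric.ball (0 : ℂ) 1) :=
    (differentiableOn_id.add_const _).div ((differentiableOn_const _).add (differentiableOn_id.const_mul _)) hne
  have hG := hf.comp hφd hφ
  have key := Complex.norm_deriv_le_one_of_mapsTo_ball (c := 0) (R := 1)
      (f := fun w => (f ((w + z) / (1 + conj z * w)) - f z) /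
        (1 - conj (f z) * f ((w + z) / (1 + conj z * w)))) ?_ ?_ one_pos
  · have d1 : HasDerivAt (fun w : ℂ => (w + z) / (1 + conj z * w)) (1 - z * conj z) 0 := by
      have := ((hasDerivAt_id (0 : ℂ)).add_const z).div
        (((hasDerivAt_id (0 : ℂ)).const_mul (conj z)).const_add 1) (by simp)
      refine this.congr_deriv ?_
      simp [mul_comm]
    have hfd : HasDerivAt f (deriv f z) ((fun w : ℂ => (w + z) / (1 + conj z * w)) 0) := by
      have := (hf.differentiableAt (Metric.isOpen_ball.mem_nhds hz)).hasDerivAt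
      simpa using this
    have d2 : HasDerivAt (fun w => f ((w + z) / (1 + conj z * w))) (deriv f z * (1 - z * conj z)) 0 :=
      hfd.comp 0 d1
    have hn : 1 - conj (f z) * f z ≠ 0 := mob_ne h h.le
    have d3 := (d2.sub_const (f z)).div ((d2.const_mul (conj (f z))).const_sub 1) (by simpa using hn)
    have d4 := d3.deriv
    have d5 : deriv (fun w => (f ((w + z) / (1 + conj z * w)) - f z) /
        (1 - conj (f z) * f ((w + z) / (1 + conj z * w)))) 0 =
        deriv f z * (1 - z * conj z) / (1 - conj (f z) * f z) := by
      refine d4.trans ?_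
      simp
      field_simp
    rw [d5] at key
    have n1 : 1 - z * conj z = ((1 - ‖z‖ ^ 2 : ℝ) : ℂ) := by rw [Complex.mul_conj']; push_cast; rfl
    have n2 : 1 - conj (f z) * f z = ((1 - ‖f z‖ ^ 2 : ℝ) : ℂ) := by
      rw [Complex.conj_mul']; push_cast; rfl
    have p1 : 0 < 1 - ‖z‖ ^ 2 := by nlinarith [norm_nonneg z]
    have p2 : 0 < 1 - ‖f z‖ ^ 2 := by nlinarith [norm_nonneg (f z)]
    rw [n1, n2, norm_div, norm_mul, Complex.norm_real, Complex.norm_real, Real.norm_of_nonneg p1.le,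
      Real.norm_of_nonneg p2.le, div_le_one p2] at key
    exact key
  · exact (hG.sub_const _).div ((differentiableOn_const _).sub (hG.const_mul _))
        fun w hw => mob_ne h (hb _ (hφ hw))
  · intro w hw
    simpa using mob_le h (hb _ (hφ hw))

theorem schwarz_deriv (f : ℂ → ℂ) (hf : DifferentiableOn ℂ f (Metric.ball 0 1))
    (hb : ∀ z ∈ Metric.ball (0 : ℂ) 1, ‖f z‖ ≤ 1) (z : ℂ) (hz : z ∈ Metric.ball (0 : ℂ) 1) :
    ‖deriv f z‖ * (1 - ‖z‖ ^ 2) ≤ 1 - ‖f z‖ ^ 2 := by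
  have key : ∀ t ∈ Set.Ioo (0 : ℝ) 1, t * ‖deriv f z‖ * (1 - ‖z‖ ^ 2) ≤ 1 - (t * ‖f z‖) ^ 2 := by
    intro t ht
    have hn : ‖(t : ℂ)‖ = t := by rw [Complex.norm_real, Real.norm_of_nonneg ht.1.le]
    have := schwarz_deriv_strict (fun w => (t : ℂ) * f w) (hf.const_mul _) ?_ z hz ?_
    · rw [deriv_const_mul _ (hf.differentiableAt (Metric.isOpen_ball.mem_nhds hz))] at this
      simpa only [norm_mul, hn] using this
    · intro w hw
      rw [norm_mul, hn]; nlinarith [hb w hw, norm_nonneg (f w), ht.1, ht.2]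
    · rw [norm_mul, hn]; nlinarith [hb z hz, norm_nonneg (f z), ht.1, ht.2]
  have c1 : Filter.Tendsto (fun t : ℝ => t * ‖deriv f z‖ * (1 - ‖z‖ ^ 2)) (nhdsWithin 1 (Set.Iio 1))
      (nhds (1 * ‖deriv f z‖ * (1 - ‖z‖ ^ 2))) :=
    (Continuous.tendsto (by fun_prop) 1).mono_left nhdsWithin_le_nhds
  have c2 : Filter.Tendsto (fun t : ℝ => 1 - (t * ‖f z‖) ^ 2) (nhdsWithin 1 (Set.Iio 1))
      (nhds (1 - (1 * ‖f z‖) ^ 2)) :=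
    (Continuous.tendsto (by fun_prop) 1).mono_left nhdsWithin_le_nhds
  have := le_of_tendsto_of_tendsto c1 c2 (by
    filter_upwards [Ioo_mem_nhdsLT (zero_lt_one' ℝ)] with t ht using key t ht)
  simpa using this

end

theorem carlson_limit (f : ℂ → ℂ) (a : ℕ → ℂ)
    (hb : ∀ z ∈ Metric.ball (0 : ℂ) 1, ‖f z‖ ≤ 1)
    (hs : ∀ z ∈ Metric.ball (0 : ℂ) 1, HasSum (fun n => a n * z ^ n) (f z)) :
    (∀ n, 1 ≤ n → ‖a (2 * n)‖ ≤ 1 - ∑ k ∈ Finset.range n, ‖a k‖ ^ 2 - ‖a n‖ ^ 2 / (1 + ‖a 0‖)) ∧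
    (∀ n, ‖a (2 * n + 1)‖ ≤ 1 - ∑ k ∈ Finset.range (n + 1), ‖a k‖ ^ 2) := by
  have lim : ∀ g : ℝ → ℝ, Continuous g → (∀ ρ, 0 ≤ ρ → ρ < 1 → 0 ≤ g ρ) → 0 ≤ g 1 := by
    intro g hg h
    refine ge_of_tendsto ((hg.tendsto 1).mono_left (nhdsWithin_le_nhds (s := Set.Iio 1))) ?_
    filter_upwards [Ioo_mem_nhdsLT (zero_lt_one' ℝ)] with t ht using h t ht.1.le ht.2
  constructor
  · intro n hn
    have := lim (fun ρ => 1 - ∑ k ∈ Finset.range n, (‖a k‖ * |ρ| ^ k) ^ 2 -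
      (‖a n‖ * |ρ| ^ n) ^ 2 / (1 + ‖a 0‖) - ‖a (2 * n)‖ * |ρ| ^ (2 * n)) (by fun_prop) ?_
    · simp only [abs_one, one_pow, mul_one] at this
      linarith
    · intro ρ h0 h1
      obtain ⟨E, M, e, hM, ho, hT⟩ := exists_model f a hb hs ρ h0 h1
      have := carlson_even_s19 E M hM e ho (fun n => a n * (ρ : ℂ) ^ n) hT n hn
      simp only [norm_mul, norm_pow, Complex.norm_real, Real.norm_eq_abs, pow_zero, mul_one] at this
      linarith
  · intro n
    have := lim (fun ρ => 1 - ∑ k ∈ Finset.range (n + 1), (‖a k‖ * |ρ| ^ k) ^ 2 -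
      ‖a (2 * n + 1)‖ * |ρ| ^ (2 * n + 1)) (by fun_prop) ?_
    · simp only [abs_one, one_pow, mul_one] at this
      linarith
    · intro ρ h0 h1
      obtain ⟨E, M, e, hM, ho, hT⟩ := exists_model f a hb hs ρ h0 h1
      have := carlson_odd_s19 E M hM e ho (fun n => a n * (ρ : ℂ) ^ n) hT n
      simp only [norm_mul, norm_pow, Complex.norm_real, Real.norm_eq_abs] at this
      linarith

theorem tail_bound (f : ℂ → ℂ) (a : ℕ → ℂ)
    (hb : ∀ z ∈ Metric.ball (0 : ℂ) 1, ‖f z‖ ≤ 1)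
    (hs : ∀ z ∈ Metric.ball (0 : ℂ) 1, HasSum (fun n => a n * z ^ n) (f z))
    (z : ℂ) (hz : z ∈ Metric.ball (0 : ℂ) 1) :
    (∑' n : ℕ, ‖a (n + 2)‖ * ‖z‖ ^ (n + 2)) + (1 / (1 + ‖a 0‖) + ‖z‖ / (1 - ‖z‖))
      * (∑' n : ℕ, ‖a (n + 1)‖ ^ 2 * ‖z‖ ^ (2 * (n + 1))) ≤
      (1 - ‖a 0‖ ^ 2) * (‖z‖ ^ 2 / (1 - ‖z‖)) := by
  obtain ⟨he, hd⟩ := carlson_limit f a hb hs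
  refine tail_ineq (fun n => ‖a n‖) (fun n => norm_nonneg _) ‖z‖ (norm_nonneg _) (by simpa using hz)
    ?_ ?_ ?_
  · intro n
    have := he (n + 1) (by omega)
    rw [Finset.sum_range_succ'] at this
    have e : 2 * (n + 1) = 2 * n + 2 := by ring
    rw [e] at this
    linarith
  · intro n
    have := hd n
    rw [Finset.sum_range_succ'] at this
    linarith
  · simpa using (hs z hz).summable.norm

/-- Theorem 7: for a bounded analytic self-map `f` of the unit disk with
coefficients `a n`: for every `z` with `|z| = r ≤ (√17 - 3)/4`,
`|f(z)| + |f'(z)| r + ∑_{n=2}^∞ |aₙ| rⁿ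
  + (1/(1+|a₀|) + r/(1-r)) ∑_{n=1}^∞ |aₙ|² r^{2n} ≤ 1`;
and for every `z` whose modulus `r` satisfies `1 - 2r - r² - r³ - r⁴ ≥ 0`,
`|f(z)|² + |f'(z)| r + ∑_{n=2}^∞ |aₙ| rⁿ
  + (1/(1+|a₀|) + r/(1-r)) ∑_{n=1}^∞ |aₙ|² r^{2n} ≤ 1`. -/
theorem stmt19 (f : ℂ → ℂ) (a : ℕ → ℂ)
    (hf : DifferentiableOn ℂ f (Metric.ball 0 1))
    (hb : ∀ z ∈ Metric.ball (0 : ℂ) 1, ‖f z‖ ≤ 1)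
    (hs : ∀ z ∈ Metric.ball (0 : ℂ) 1, HasSum (fun n => a n * z ^ n) (f z)) :
    (∀ z : ℂ, z ∈ Metric.ball (0 : ℂ) 1 → ‖z‖ ≤ (Real.sqrt 17 - 3) / 4 →
      ‖f z‖ + ‖deriv f z‖ * ‖z‖ + (∑' n : ℕ, ‖a (n + 2)‖ * ‖z‖ ^ (n + 2))
        + (1 / (1 + ‖a 0‖) + ‖z‖ / (1 - ‖z‖))
          * (∑' n : ℕ, ‖a (n + 1)‖ ^ 2 * ‖z‖ ^ (2 * (n + 1)))
        ≤ 1) ∧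
    (∀ z : ℂ, z ∈ Metric.ball (0 : ℂ) 1 →
      0 ≤ 1 - 2 * ‖z‖ - ‖z‖ ^ 2 - ‖z‖ ^ 3 - ‖z‖ ^ 4 →
      ‖f z‖ ^ 2 + ‖deriv f z‖ * ‖z‖ + (∑' n : ℕ, ‖a (n + 2)‖ * ‖z‖ ^ (n + 2))
        + (1 / (1 + ‖a 0‖) + ‖z‖ / (1 - ‖z‖))
          * (∑' n : ℕ, ‖a (n + 1)‖ ^ 2 * ‖z‖ ^ (2 * (n + 1)))
        ≤ 1) := by
  have ha : a 0 = f 0 := by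
    have h := hs 0 (by simp)
    refine (hasSum_single 0 ?_).unique h |>.symm ▸ ?_
    · intro n hn; simp [hn]
    · simp
  have ha1 : ‖a 0‖ ≤ 1 := ha ▸ hb 0 (by simp)
  constructor
  · intro z hz hr
    have h := final1 ‖a 0‖ ‖f z‖ ‖deriv f z‖ ‖z‖ _ (Real.sqrt 17) (norm_nonneg _) ha1 (norm_nonneg _)
      (norm_nonneg _) (Real.sq_sqrt (by norm_num)) (Real.sqrt_nonneg _) hr
      (ha ▸ schwarz_value f hf hb z hz) (schwarz_deriv f hf hb z hz) (tail_bound f a hb hs z hz)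
    linarith
  · intro z hz hr
    have h := final2 ‖a 0‖ ‖f z‖ ‖deriv f z‖ ‖z‖ _ (norm_nonneg _) ha1 (norm_nonneg _)
      (norm_nonneg _) (by simpa using hz) hr
      (ha ▸ schwarz_value f hf hb z hz) (schwarz_deriv f hf hb z hz) (tail_bound f a hb hs z hz)
    linarith
end
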